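/- Harmonic generalized CK-extension: Let Ω₀ ⊆ ℝ^{p+1} be a domain and A₀, A₁ ∈ C^ω(Ω₀, 𝔸) real analytic functions. Then there exists a unique sequence of real analytic functions {A_k}_{k≥2} ⊆ C^ω(Ω₀, 𝔸) such that the series f(x) = Σ_{k≥0} x_q^k A_k(x_p) converges in a p-symmetric slice domain Ω ⊆ Ω₀* := {x_p + x_q : x_p ∈ Ω₀, x_q ∈ ℝ^q} with Ω₀ ⊂ Ω and its sum f is harmonic in Ω. The coefficients are necessarily A_{2k} = (Γ(q/2)/(2^{2k} k! Γ(k + q/2))) Δ_{x_p}^k A₀ and A_{2k+1} = (Γ(q/2 + 1)/(2^{2k} k! Γ(k + q/2 + 1))) Δ_{x_p}^k A₁, so f = HGCK[A₀, A₁]; moreover f satisfies the initial conditions f(x)|_{x_q = 0} = A₀(x_p) and (D_{x_q} f)(x)|_{x_q = 0} = −q A₁(x_p). -/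

import Mathlib

open scoped BigOperators
open Filter Topology

namespace GPSM

variable (A : Type*) [NormedAddCommGroup A] [NormedSpace ℝ A] [Mul A] [One A]

/-- `A` is a real alternative algebra with unit `1`, of finite dimension `d > 1`,
equipped with an anti-involution `conj` (a real-linear map with `(a^c)^c = a`,
`(ab)^c = b^c a^c`, fixing the reals).  The associator is alternating (left/right
alternative laws). -/
structure IsAltStarAlg (conj : A → A) : Prop where
  finDim : FiniteDimensional ℝ A
  one_lt_finrank : 1 < Module.finrank ℝ A
  mul_add' : ∀ a b c : A, a * (b + c) = a * b + a * c
  add_mul' : ∀ a b c : A, (a + b) * c = a * c + b * c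
  smul_mul' : ∀ (r : ℝ) (a b : A), (r • a) * b = r • (a * b)
  mul_smul' : ∀ (r : ℝ) (a b : A), a * (r • b) = r • (a * b)
  one_mul' : ∀ a : A, 1 * a = a
  mul_one' : ∀ a : A, a * 1 = a
  alt_left : ∀ a b : A, a * (a * b) = a * a * b
  alt_right : ∀ a b : A, a * b * b = a * (b * b)
  conj_add : ∀ a b : A, conj (a + b) = conj a + conj b
  conj_smul : ∀ (r : ℝ) (a : A), conj (r • a) = r • conj a
  conj_conj : ∀ a : A, conj (conj a) = a
  conj_mul : ∀ a b : A, conj (a * b) = conj b * conj a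
  conj_one : conj 1 = 1

/-- `v 0, v 1, …, v m` is a hypercomplex basis of the hypercomplex subspace
`M = span(v 0, …, v m)` of `A`: `v 0 = 1`, `t(v s) = 0`, `n(v s) = 1`, the `v s`
anticommute for distinct `s, t ∈ {1,…,m}`, they are linearly independent, and
`M` is contained in the quadratic cone `Q_A`. -/
structure IsHypBasis (conj : A → A) (v : ℕ → A) (m : ℕ) : Prop where
  v_zero : v 0 = 1
  trace_zero : ∀ s, 1 ≤ s → s ≤ m → v s + conj (v s) = 0
  norm_one : ∀ s, 1 ≤ s → s ≤ m → v s * conj (v s) = 1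
  anticomm : ∀ s t, 1 ≤ s → s ≤ m → 1 ≤ t → t ≤ m → s ≠ t → v s * v t = -(v t * v s)
  indep : LinearIndependent ℝ (fun i : Fin (m + 1) => v i)
  mem_cone : ∀ x ∈ Submodule.span ℝ (Set.range fun i : Fin (m + 1) => v (i : ℕ)),
      ∃ tr nr : ℝ, x + conj x = tr • (1 : A) ∧ x * conj x = nr • (1 : A) ∧
        ((∃ r : ℝ, x = r • (1 : A)) ∨ tr ^ 2 < 4 * nr)

variable {A}

/-- Identification of `ℝ^{m+1}` with the hypercomplex subspace `M`:
`(x_0,…,x_m) ↦ Σ x_s • v s`. -/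
def emb (v : ℕ → A) (m : ℕ) (x : Fin (m + 1) → ℝ) : A :=
  ∑ s : Fin (m + 1), x s • v (s : ℕ)

/-- First `p+1` coordinates of a point of `M ≅ ℝ^{m+1}`, i.e. the `x_p`-part. -/
def projP (m p : ℕ) (x : Fin (m + 1) → ℝ) : Fin (p + 1) → ℝ := fun s =>
  if h : (s : ℕ) < m + 1 then x ⟨(s : ℕ), h⟩ else 0

/-- Inclusion `ℝ^{p+1} ⊆ ℝ^{m+1}` (remaining coordinates `0`). -/
def injP (m p : ℕ) (y : Fin (p + 1) → ℝ) : Fin (m + 1) → ℝ := fun s =>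
  if h : (s : ℕ) < p + 1 then y ⟨(s : ℕ), h⟩ else 0

/-- The coordinates of `x_q` (last `q = m - p` coordinates of `x`). -/
def xqpart (m p : ℕ) (x : Fin (m + 1) → ℝ) : Fin (m + 1) → ℝ := fun s =>
  if (s : ℕ) ≤ p then 0 else x s

/-- The coordinates of `x_p` inside `ℝ^{m+1}`. -/
def xppart (m p : ℕ) (x : Fin (m + 1) → ℝ) : Fin (m + 1) → ℝ := fun s =>
  if (s : ℕ) ≤ p then x s else 0

/-- `r = |x_q|`. -/
noncomputable def rad (m p : ℕ) (x : Fin (m + 1) → ℝ) : ℝ :=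
  Real.sqrt (∑ s : Fin (m + 1), (xqpart m p x s) ^ 2)

/-- `ω = x_q / |x_q|` (coordinates), `0` when `x_q = 0`. -/
noncomputable def normq (m p : ℕ) (x : Fin (m + 1) → ℝ) : Fin (m + 1) → ℝ :=
  (rad m p x)⁻¹ • xqpart m p x

/-- The reflection `x = x_p + x_q ↦ x_⋄ = x_p - x_q`. -/
def reflP (m p : ℕ) (x : Fin (m + 1) → ℝ) : Fin (m + 1) → ℝ := fun s =>
  if (s : ℕ) ≤ p then x s else -x s

/-- The sphere `𝕊 = {x_q ∈ span(v_{p+1},…,v_m) : x_q² = -1}`, in coordinates. -/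
def Sph (v : ℕ → A) (m p : ℕ) : Set (Fin (m + 1) → ℝ) :=
  {w | (∀ s : Fin (m + 1), (s : ℕ) ≤ p → w s = 0) ∧ emb v m w * emb v m w = -1}

/-- The point `x_p + r ω` of `M ≅ ℝ^{m+1}`. -/
def pt (m p : ℕ) (w : Fin (m + 1) → ℝ) (y : Fin (p + 1) → ℝ) (r : ℝ) :
    Fin (m + 1) → ℝ :=
  injP m p y + r • w

/-- The slice `Ω_ω ⊆ ℝ^{p+2}` of `Ω` at `ω`. -/
def sliceSet (m p : ℕ) (Ω : Set (Fin (m + 1) → ℝ)) (w : Fin (m + 1) → ℝ) :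
    Set ((Fin (p + 1) → ℝ) × ℝ) := {z | pt m p w z.1 z.2 ∈ Ω}

/-- The restriction `f_ω` of `f` to the slice at `ω`, as a function on `ℝ^{p+2}`. -/
def sliceFun (m p : ℕ) (f : (Fin (m + 1) → ℝ) → A) (w : Fin (m + 1) → ℝ) :
    (Fin (p + 1) → ℝ) × ℝ → A := fun z => f (pt m p w z.1 z.2)

/-- Partial derivative `∂_{x_s}` of a function on `ℝ^{m+1}`. -/
noncomputable def pdF (m : ℕ) (s : Fin (m + 1)) (f : (Fin (m + 1) → ℝ) → A)
    (x : Fin (m + 1) → ℝ) : A := fderiv ℝ f x (Pi.single s 1)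

/-- Partial derivative `∂_{x_s}` of a function on `ℝ^{p+1}`. -/
noncomputable def pdP (p : ℕ) (s : Fin (p + 1)) (g : (Fin (p + 1) → ℝ) → A)
    (y : Fin (p + 1) → ℝ) : A := fderiv ℝ g y (Pi.single s 1)

/-- Partial derivative `∂_{x_s}` of a function on `ℝ^{p+2} = ℝ^{p+1} × ℝ`. -/
noncomputable def pdSx (p : ℕ) (s : Fin (p + 1)) (G : (Fin (p + 1) → ℝ) × ℝ → A)
    (z : (Fin (p + 1) → ℝ) × ℝ) : A := fderiv ℝ G z (Pi.single s 1, 0)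

/-- Partial derivative `∂_r` of a function on `ℝ^{p+2} = ℝ^{p+1} × ℝ`. -/
noncomputable def pdSr (p : ℕ) (G : (Fin (p + 1) → ℝ) × ℝ → A)
    (z : (Fin (p + 1) → ℝ) × ℝ) : A := fderiv ℝ G z (0, 1)

/-- Second partial derivative `∂_r²`. -/
noncomputable def pdSr2 (p : ℕ) (G : (Fin (p + 1) → ℝ) × ℝ → A)
    (z : (Fin (p + 1) → ℝ) × ℝ) : A := pdSr p (pdSr p G) z

/-- The operator `Σ_{lo ≤ s ≤ hi} v_s ∂_{x_s}` on functions on `ℝ^{m+1}`.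
`Dop v m 0 p` is `D_{x_p}`, `Dop v m (p+1) m` is `D_{x_q}`, `Dop v m 0 m` is `D_x`. -/
noncomputable def Dop (v : ℕ → A) (m lo hi : ℕ) (f : (Fin (m + 1) → ℝ) → A)
    (x : Fin (m + 1) → ℝ) : A :=
  ∑ s : Fin (m + 1), if lo ≤ (s : ℕ) ∧ (s : ℕ) ≤ hi then v (s : ℕ) * pdF m s f x else 0

/-- The conjugate operator `∂_{x_0} - Σ_{1 ≤ s ≤ hi} v_s ∂_{x_s}` on functions on
`ℝ^{m+1}`; `Dbarop v m p` is `D̄_{x_p}`, `Dbarop v m m` is `D̄_x`. -/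
noncomputable def Dbarop (v : ℕ → A) (m hi : ℕ) (f : (Fin (m + 1) → ℝ) → A)
    (x : Fin (m + 1) → ℝ) : A :=
  pdF m 0 f x -
    ∑ s : Fin (m + 1), if 1 ≤ (s : ℕ) ∧ (s : ℕ) ≤ hi then v (s : ℕ) * pdF m s f x else 0

/-- The operator `D_{x_p} = Σ_{s=0}^p v_s ∂_{x_s}` on functions on `ℝ^{p+1}`. -/
noncomputable def DopP (v : ℕ → A) (p : ℕ) (g : (Fin (p + 1) → ℝ) → A)
    (y : Fin (p + 1) → ℝ) : A :=
  ∑ s : Fin (p + 1), v (s : ℕ) * pdP p s g y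

/-- The operator `D̄_{x_p} = ∂_{x_0} - Σ_{s=1}^p v_s ∂_{x_s}` on functions on `ℝ^{p+1}`. -/
noncomputable def DbaropP (v : ℕ → A) (p : ℕ) (g : (Fin (p + 1) → ℝ) → A)
    (y : Fin (p + 1) → ℝ) : A :=
  pdP p 0 g y - ∑ s : Fin (p + 1), if 1 ≤ (s : ℕ) then v (s : ℕ) * pdP p s g y else 0

/-- The operator `D_{x_p}` on functions on `ℝ^{p+2} = ℝ^{p+1} × ℝ`. -/
noncomputable def DopSx (v : ℕ → A) (p : ℕ) (G : (Fin (p + 1) → ℝ) × ℝ → A)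
    (z : (Fin (p + 1) → ℝ) × ℝ) : A :=
  ∑ s : Fin (p + 1), v (s : ℕ) * pdSx p s G z

/-- The operator `D̄_{x_p}` on functions on `ℝ^{p+2} = ℝ^{p+1} × ℝ`. -/
noncomputable def DbaropSx (v : ℕ → A) (p : ℕ) (G : (Fin (p + 1) → ℝ) × ℝ → A)
    (z : (Fin (p + 1) → ℝ) × ℝ) : A :=
  pdSx p 0 G z - ∑ s : Fin (p + 1), if 1 ≤ (s : ℕ) then v (s : ℕ) * pdSx p s G z else 0

/-- The Laplacian `Δ_x` on functions on `ℝ^{m+1}`. -/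
noncomputable def lapF (m : ℕ) (f : (Fin (m + 1) → ℝ) → A)
    (x : Fin (m + 1) → ℝ) : A :=
  ∑ s : Fin (m + 1), pdF m s (pdF m s f) x

/-- The Laplacian `Δ_{x_p}` on functions on `ℝ^{p+1}`. -/
noncomputable def lapP (p : ℕ) (g : (Fin (p + 1) → ℝ) → A)
    (y : Fin (p + 1) → ℝ) : A :=
  ∑ s : Fin (p + 1), pdP p s (pdP p s g) y

/-- Iterated Laplacian `Δ_x^k`. -/
noncomputable def lapIterF (m k : ℕ) (f : (Fin (m + 1) → ℝ) → A) :
    (Fin (m + 1) → ℝ) → A :=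
  (fun g => lapF m g)^[k] f

/-- Iterated Laplacian `Δ_{x_p}^k`. -/
noncomputable def lapIterP (p k : ℕ) (g : (Fin (p + 1) → ℝ) → A) :
    (Fin (p + 1) → ℝ) → A :=
  (fun h => lapP p h)^[k] g

/-- The Laplacian `Δ_{x'} = Δ_{x_p} + ∂_r²` on functions on `ℝ^{p+2}`. -/
noncomputable def lapSx (p : ℕ) (G : (Fin (p + 1) → ℝ) × ℝ → A)
    (z : (Fin (p + 1) → ℝ) × ℝ) : A :=
  (∑ s : Fin (p + 1), pdSx p s (pdSx p s G) z) + pdSr2 p G z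

/-- The slice Cauchy-Riemann operator `D_ω = D_{x_p} + ω ∂_r` applied to a function
on `ℝ^{p+2}`, where `ω` is given in coordinates by `w`. -/
noncomputable def DomCR (v : ℕ → A) (m p : ℕ) (w : Fin (m + 1) → ℝ)
    (G : (Fin (p + 1) → ℝ) × ℝ → A) (z : (Fin (p + 1) → ℝ) × ℝ) : A :=
  DopSx v p G z + emb v m w * pdSr p G z

/-- `f` is left generalized partial-slice monogenic (of type `(p, m-p)`) on `Ω`. -/
def GSM (v : ℕ → A) (m p : ℕ) (f : (Fin (m + 1) → ℝ) → A)
    (Ω : Set (Fin (m + 1) → ℝ)) : Prop :=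
  ∀ w ∈ Sph v m p, ContDiffOn ℝ 1 (sliceFun m p f w) (sliceSet m p Ω w) ∧
    ∀ z ∈ sliceSet m p Ω w, DomCR v m p w (sliceFun m p f w) z = 0

/-- `Ω` is partially symmetric with respect to `ℝ^{p+1}`. -/
def PSym (v : ℕ → A) (m p : ℕ) (Ω : Set (Fin (m + 1) → ℝ)) : Prop :=
  ∀ x ∈ Ω, ∀ w ∈ Sph v m p, xppart m p x + rad m p x • w ∈ Ω

/-- `Ω` is a slice domain: a domain meeting `ℝ^{p+1}` all of whose slices are
domains in `ℝ^{p+2}`. -/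
def SliceDomain (v : ℕ → A) (m p : ℕ) (Ω : Set (Fin (m + 1) → ℝ)) : Prop :=
  IsOpen Ω ∧ IsConnected Ω ∧ (∃ x ∈ Ω, xqpart m p x = 0) ∧
    ∀ w ∈ Sph v m p, IsConnected (sliceSet m p Ω w)

/-- The reflection `(x_p, r) ↦ (x_p, -r)` of `ℝ^{p+2}`. -/
def reflD (p : ℕ) (z : (Fin (p + 1) → ℝ) × ℝ) : (Fin (p + 1) → ℝ) × ℝ := (z.1, -z.2)

/-- The p-symmetric completion `Ω_D ⊆ M` of `D ⊆ ℝ^{p+2}`. -/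
def OmegaD (v : ℕ → A) (m p : ℕ) (D : Set ((Fin (p + 1) → ℝ) × ℝ)) :
    Set (Fin (m + 1) → ℝ) :=
  {x | ∃ w ∈ Sph v m p, ∃ z ∈ D, x = pt m p w z.1 z.2}

/-- `(F₁, F₂)` satisfies the even-odd (stem function) conditions on `D`. -/
def IsStem (p : ℕ) (D : Set ((Fin (p + 1) → ℝ) × ℝ))
    (F₁ F₂ : (Fin (p + 1) → ℝ) × ℝ → A) : Prop :=
  ∀ z ∈ D, F₁ (reflD p z) = F₁ z ∧ F₂ (reflD p z) = -F₂ z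

/-- `f` is the generalized partial-slice function induced by the stem `(F₁, F₂)`:
`f(x_p + rω) = F₁(x_p, r) + ω F₂(x_p, r)`. -/
def Induced (v : ℕ → A) (m p : ℕ) (D : Set ((Fin (p + 1) → ℝ) × ℝ))
    (F₁ F₂ : (Fin (p + 1) → ℝ) × ℝ → A) (f : (Fin (m + 1) → ℝ) → A) : Prop :=
  ∀ w ∈ Sph v m p, ∀ z ∈ D, f (pt m p w z.1 z.2) = F₁ z + emb v m w * F₂ z

/-- The generalized Cauchy-Riemann system for the stem `(F₁, F₂)` on `D`. -/
def StemCR (v : ℕ → A) (p : ℕ) (D : Set ((Fin (p + 1) → ℝ) × ℝ))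
    (F₁ F₂ : (Fin (p + 1) → ℝ) × ℝ → A) : Prop :=
  ∀ z ∈ D, DopSx v p F₁ z - pdSr p F₂ z = 0 ∧ DbaropSx v p F₂ z + pdSr p F₁ z = 0

/-- `f` is generalized partial-slice regular on `Ω_D`. -/
def MemGSR (v : ℕ → A) (m p : ℕ) (D : Set ((Fin (p + 1) → ℝ) × ℝ))
    (f : (Fin (m + 1) → ℝ) → A) : Prop :=
  ∃ F₁ F₂ : (Fin (p + 1) → ℝ) × ℝ → A, IsStem p D F₁ F₂ ∧
    ContDiffOn ℝ 1 F₁ D ∧ ContDiffOn ℝ 1 F₂ D ∧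
    Induced v m p D F₁ F₂ f ∧ StemCR v p D F₁ F₂

/-- `f` is a generalized partial-slice function on `Ω`. -/
def MemGS (v : ℕ → A) (m p : ℕ) (Ω : Set (Fin (m + 1) → ℝ))
    (f : (Fin (m + 1) → ℝ) → A) : Prop :=
  ∃ F₁ F₂ : (Fin (p + 1) → ℝ) × ℝ → A,
    (∀ z : (Fin (p + 1) → ℝ) × ℝ, F₁ (reflD p z) = F₁ z ∧ F₂ (reflD p z) = -F₂ z) ∧
    ∀ x ∈ Ω, f x = F₁ (projP m p x, rad m p x) +
      emb v m (normq m p x) * F₂ (projP m p x, rad m p x)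

/-- Non-associative power: `a^n` with products taken from the right. -/
def apow (a : A) (n : ℕ) : A := (fun b => a * b)^[n] 1

/-- Partial even part `PE[f](x) = (f(x) + f(x_⋄))/2`. -/
noncomputable def PE (m p : ℕ) (f : (Fin (m + 1) → ℝ) → A)
    (x : Fin (m + 1) → ℝ) : A := (2 : ℝ)⁻¹ • (f x + f (reflP m p x))

/-- Partial odd part `PO[f](x) = (f(x) - f(x_⋄))/2`. -/
noncomputable def PO (m p : ℕ) (f : (Fin (m + 1) → ℝ) → A)
    (x : Fin (m + 1) → ℝ) : A := (2 : ℝ)⁻¹ • (f x - f (reflP m p x))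

/-- `Ω₀* = {x_p + x_q : x_p ∈ Ω₀, x_q ∈ ℝ^q}`. -/
def Omega0star (m p : ℕ) (Ω₀ : Set (Fin (p + 1) → ℝ)) : Set (Fin (m + 1) → ℝ) :=
  {x | projP m p x ∈ Ω₀}

/-- The spherical derivative `f'_s(x) = (1/2) x_q⁻¹ (f(x) - f(x_⋄))`
(using `x_q⁻¹ = -x_q/|x_q|²`). -/
noncomputable def sder (v : ℕ → A) (m p : ℕ) (f : (Fin (m + 1) → ℝ) → A)
    (x : Fin (m + 1) → ℝ) : A :=
  -(((2 : ℝ) * rad m p x ^ 2)⁻¹) • (emb v m (xqpart m p x) * (f x - f (reflP m p x)))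

/-- The spherical Dirac operator
`Γ f = -(1/2) Σ_{p+1 ≤ i,j ≤ m} v_i (v_j (L_{ij} f))`. -/
noncomputable def sphericalGamma (v : ℕ → A) (m p : ℕ) (f : (Fin (m + 1) → ℝ) → A)
    (x : Fin (m + 1) → ℝ) : A :=
  -((2 : ℝ)⁻¹) • ∑ i : Fin (m + 1), ∑ j : Fin (m + 1),
    if p < (i : ℕ) ∧ p < (j : ℕ) then
      v (i : ℕ) * (v (j : ℕ) * (x i • pdF m j f x - x j • pdF m i f x)) else 0

/-- The slice Cauchy-Riemann operator `D_ω` applied to (the slice restriction of) a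
function `f` on `M`, at the point `x` (with `ω = x_q/|x_q|`). -/
noncomputable def DomCRat (v : ℕ → A) (m p : ℕ) (f : (Fin (m + 1) → ℝ) → A)
    (x : Fin (m + 1) → ℝ) : A :=
  DomCR v m p (normq m p x) (sliceFun m p f (normq m p x)) (projP m p x, rad m p x)

/-- `f` is left monogenic on `Ω`: `f ∈ C¹` and `D_x f = 0`. -/
def Monogenic (v : ℕ → A) (m : ℕ) (f : (Fin (m + 1) → ℝ) → A)
    (Ω : Set (Fin (m + 1) → ℝ)) : Prop :=
  ContDiffOn ℝ 1 f Ω ∧ ∀ x ∈ Ω, Dop v m 0 m f x = 0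

/-- `f` is harmonic on `Ω`: `f ∈ C²` and `Δ_x f = 0`. -/
def Harmonic (m : ℕ) (f : (Fin (m + 1) → ℝ) → A)
    (Ω : Set (Fin (m + 1) → ℝ)) : Prop :=
  ContDiffOn ℝ 2 f Ω ∧ ∀ x ∈ Ω, lapF m f x = 0

/-- A family of functions converges normally (locally a summable uniform bound). -/
def NormallyConvOn {E F : Type*} [TopologicalSpace E] [NormedAddCommGroup F]
    (u : ℕ → E → F) (s : Set E) : Prop :=
  ∀ x ∈ s, ∃ U ∈ nhds x, ∃ c : ℕ → ℝ, Summable c ∧ ∀ k : ℕ, ∀ y ∈ U, ‖u k y‖ ≤ c k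

/-- The generalized partial-slice CK-extension
`CK[f₀](x) = Σ_k (r^{2k}/(2k)!)(-Δ_{x_p})^k f₀(x_p)
  + ω Σ_k (r^{2k+1}/(2k+1)!)(-Δ_{x_p})^k (D_{x_p} f₀)(x_p)`. -/
noncomputable def CKe (v : ℕ → A) (m p : ℕ) (f₀ : (Fin (p + 1) → ℝ) → A)
    (x : Fin (m + 1) → ℝ) : A :=
  (∑' k : ℕ, (((-1 : ℝ) ^ k * rad m p x ^ (2 * k)) / (2 * k).factorial) •
      lapIterP p k f₀ (projP m p x)) +
  emb v m (normq m p x) *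
    ∑' k : ℕ, (((-1 : ℝ) ^ k * rad m p x ^ (2 * k + 1)) / (2 * k + 1).factorial) •
      lapIterP p k (DopP v p f₀) (projP m p x)

/-- The coefficient `Γ(q/2)(-1)^k r^{2k} / (2^{2k} k! Γ(k + q/2))`. -/
noncomputable def hgckC (q k : ℕ) (r : ℝ) : ℝ :=
  (Real.Gamma ((q : ℝ) / 2) * (-1) ^ k * r ^ (2 * k)) /
    (2 ^ (2 * k) * (k.factorial : ℝ) * Real.Gamma ((k : ℝ) + (q : ℝ) / 2))

/-- The coefficient `Γ(q/2)(-1)^k r^{2k} / (2^{2k+1} k! Γ(k + q/2 + 1))`. -/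
noncomputable def gckC' (q k : ℕ) (r : ℝ) : ℝ :=
  (Real.Gamma ((q : ℝ) / 2) * (-1) ^ k * r ^ (2 * k)) /
    (2 ^ (2 * k + 1) * (k.factorial : ℝ) * Real.Gamma ((k : ℝ) + (q : ℝ) / 2 + 1))

/-- The coefficient `Γ(q/2 + 1)(-1)^k r^{2k} / (2^{2k} k! Γ(k + q/2 + 1))`. -/
noncomputable def hgckC' (q k : ℕ) (r : ℝ) : ℝ :=
  (Real.Gamma ((q : ℝ) / 2 + 1) * (-1) ^ k * r ^ (2 * k)) /
    (2 ^ (2 * k) * (k.factorial : ℝ) * Real.Gamma ((k : ℝ) + (q : ℝ) / 2 + 1))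

/-- The monogenic generalized CK-extension `GCK[A₀]`. -/
noncomputable def GCKe (v : ℕ → A) (m p : ℕ) (A₀ : (Fin (p + 1) → ℝ) → A)
    (x : Fin (m + 1) → ℝ) : A :=
  (∑' k : ℕ, hgckC (m - p) k (rad m p x) • lapIterP p k A₀ (projP m p x)) +
  emb v m (xqpart m p x) *
    ∑' k : ℕ, gckC' (m - p) k (rad m p x) • lapIterP p k (DopP v p A₀) (projP m p x)

/-- The harmonic generalized CK-extension `HGCK[A₀, A₁]`. -/
noncomputable def HGCKe (v : ℕ → A) (m p : ℕ) (A₀ A₁ : (Fin (p + 1) → ℝ) → A)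
    (x : Fin (m + 1) → ℝ) : A :=
  (∑' k : ℕ, hgckC (m - p) k (rad m p x) • lapIterP p k A₀ (projP m p x)) +
  emb v m (xqpart m p x) *
    ∑' k : ℕ, hgckC' (m - p) k (rad m p x) • lapIterP p k A₁ (projP m p x)

/-- The operator `(1/r)∂_r`, extended to `r = 0` by its limit `∂_r²` (on even
functions). -/
noncomputable def T1 (p : ℕ) (G : (Fin (p + 1) → ℝ) × ℝ → A) :
    (Fin (p + 1) → ℝ) × ℝ → A := fun z =>
  if z.2 = 0 then pdSr2 p G z else (z.2)⁻¹ • pdSr p G z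

/-- The operator `∂_r ∘ (1/r)`, extended to `r = 0` by its limit `(1/2)∂_r²` (on odd
functions). -/
noncomputable def T2 (p : ℕ) (G : (Fin (p + 1) → ℝ) × ℝ → A) :
    (Fin (p + 1) → ℝ) × ℝ → A := fun z =>
  if z.2 = 0 then (2 : ℝ)⁻¹ • pdSr2 p G z
  else fderiv ℝ (fun t : ℝ => t⁻¹ • G (z.1, t)) z.2 1

/-- `C_q(k) = (q-1)(q-3)⋯(q-2k+1)`, `C_q(0) = 1`. -/
noncomputable def cq (q k : ℕ) : ℝ :=
  ∏ i ∈ Finset.range k, ((q : ℝ) - (2 * (i : ℝ) + 1))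

/-- Double factorial. -/
def dfac : ℕ → ℕ
  | 0 => 1
  | 1 => 1
  | n + 2 => (n + 2) * dfac n

/-- The Fueter-Sce constant `γ_q = (-1)^{(q-1)/2} (q-1)!!/(q-2)!!`. -/
noncomputable def gammaQ (q : ℕ) : ℝ :=
  (-1 : ℝ) ^ ((q - 1) / 2) * (dfac (q - 1) : ℝ) / (dfac (q - 2) : ℝ)

/-!
Left alternativity gives `x_q (x_q b) = (x_q x_q) b = -|x_q|² b`, so left multiplication by `x_q` is
a linear family `a(x)` of operators on `A` with `a(x)² = -|x_q|²`, and the series is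
`Σ a(x)ⁿ Aₙ(x_p)`: only the associative algebra of operators matters. There
`Δ_{x_q} a(x)^(n+2) = -cₙ a(x)ⁿ` for a positive number `cₙ` depending on `q` and `n`, so that the
series is formally harmonic exactly when `Δ_{x_p} Aₙ = cₙ A_{n+2}` for all `n`. This recursion is
solved by the Gamma function coefficients, and Cauchy estimates for the iterated Laplacians of
analytic functions make the solution converge, with two derivatives, on a tube around every point.

Uniqueness has to start from bare summability and harmonicity of the sum, which say nothing about
the regularity of the coefficients. By Weyl's lemma the sum is smooth; on a line through a point of
`ℝ^(p+1)` in a direction `v_s` with `s > p` it is a power series, so the coefficients are, up to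
sign, its derivatives in that direction, which commute with `Δ_x`. Hence they are smooth, and the
recursion is read off from the harmonicity of the sum.
-/

open MeasureTheory
open scoped ContDiff

section PartialDerivatives

variable {ι F : Type*} [NormedAddCommGroup F] [NormedSpace ℝ F]

section

variable [DecidableEq ι]

/-- The partial derivative `∂ᵢ f` of a function on `ℝ^ι`; both `pdF` and `pdP` are instances. -/
noncomputable def pderiv (i : ι) (f : (ι → ℝ) → F) (x : ι → ℝ) : F :=
  fderiv ℝ f x (Pi.single i 1)

theorem pderiv_congr {f g : (ι → ℝ) → F} {x : ι → ℝ} (h : f =ᶠ[𝓝 x] g) (i : ι) :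
    pderiv i f =ᶠ[𝓝 x] pderiv i g :=
  (h.fderiv (𝕜 := ℝ)).fun_comp fun L => L (Pi.single i 1)

end

variable [Fintype ι]

theorem hasFDerivAt_sum_sq (σ : Finset ι) (x : ι → ℝ) :
    HasFDerivAt (fun z : ι → ℝ => ∑ j ∈ σ, z j ^ 2)
      (∑ j ∈ σ, (2 * x j) • ContinuousLinearMap.proj (R := ℝ) (φ := fun _ : ι => ℝ) j) x :=
  .fun_sum fun j _ => by
    simpa using HasFDerivAt.pow (f := fun z : ι → ℝ => z j) (hasFDerivAt_apply j x) 2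

variable [DecidableEq ι]

/-- The Laplacian `∑ᵢ ∂ᵢ∂ᵢ` on `ℝ^ι`; both `lapF` and `lapP` are instances. The space `ι → ℝ`
carries the supremum norm, which is why this is not `InnerProductSpace.laplacian`. -/
noncomputable def laplacian (f : (ι → ℝ) → F) (x : ι → ℝ) : F :=
  ∑ i, pderiv i (pderiv i f) x

theorem contDiff_pderiv {n : WithTop ℕ∞} {f : (ι → ℝ) → F} (hf : ContDiff ℝ (n + 1) f) (i : ι) :
    ContDiff ℝ n (pderiv i f) :=
  (hf.fderiv_right le_rfl).clm_apply contDiff_const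

theorem continuous_pderiv_pderiv {f : (ι → ℝ) → F} (hf : ContDiff ℝ 2 f) (i j : ι) :
    Continuous (pderiv j (pderiv i f)) :=
  (contDiff_pderiv (n := 0) (contDiff_pderiv (n := 1) (by simpa [one_add_one_eq_two] using hf) i)
    j).continuous

theorem fderiv_eq_sum_pderiv (f : (ι → ℝ) → F) (x z : ι → ℝ) :
    fderiv ℝ f x z = ∑ i, z i • pderiv i f x := by
  conv_lhs => rw [pi_eq_sum_univ' z, map_sum]
  simp only [map_smul, pderiv]

theorem laplacian_congr {f g : (ι → ℝ) → F} {x : ι → ℝ} (h : f =ᶠ[𝓝 x] g) :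
    laplacian f x = laplacian g x :=
  Finset.sum_congr rfl fun i _ => (pderiv_congr (pderiv_congr h i) i).eq_of_nhds

end PartialDerivatives

section Weyl

variable {ι F : Type*} [Fintype ι] [NormedAddCommGroup F] [NormedSpace ℝ F]

theorem hasDerivAt_integral_smul_of_hasCompactSupport {φ : (ι → ℝ) → ℝ} (hφ : Continuous φ)
    (hφc : HasCompactSupport φ) {g g' : ℝ → (ι → ℝ) → F} (hg : Continuous (Function.uncurry g))
    (hg' : Continuous (Function.uncurry g'))
    (hderiv : ∀ t z, HasDerivAt (fun t => g t z) (g' t z) t) (t : ℝ) :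
    HasDerivAt (fun t => ∫ z, φ z • g t z) (∫ z, φ z • g' t z) t := by
  have integrable_smul {h : (ι → ℝ) → F} (hh : Continuous h) :
      Integrable (fun z => φ z • h z) :=
    (hφ.smul hh).integrable_of_hasCompactSupport hφc.smul_right
  obtain ⟨C, hC⟩ := ((isCompact_closedBall t 1).prod hφc.isCompact).exists_bound_of_continuousOn
    hg'.continuousOn
  refine (hasDerivAt_integral_of_dominated_loc_of_deriv_le (Metric.ball_mem_nhds t one_pos)
    (.of_forall fun s => (hφ.smul (hg.uncurry_left s)).aestronglyMeasurable)
    (integrable_smul (hg.uncurry_left t)) (hφ.smul (hg'.uncurry_left t)).aestronglyMeasurable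
    (bound := fun z => ‖φ z‖ * C) (.of_forall fun z s hs => ?_)
    ((hφ.integrable_of_hasCompactSupport hφc).norm.mul_const C)
    (.of_forall fun z s _ => (hderiv s z).const_smul (φ z))).2
  rw [norm_smul]
  by_cases hz : z ∈ tsupport φ
  · gcongr
    exact hC (s, z) ⟨Metric.ball_subset_closedBall hs, hz⟩
  · simp [image_eq_zero_of_notMem_tsupport hz]

theorem sq_le_sum_sq {R : ℝ} (hR : 0 < R) {z : ι → ℝ} (hz : R ≤ ‖z‖) : R ^ 2 ≤ ∑ i, z i ^ 2 := by
  obtain ⟨i, hi⟩ : ∃ i, R ≤ ‖z i‖ := by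
    by_contra! h
    exact hz.not_gt ((pi_norm_lt_iff hR).2 h)
  calc R ^ 2 ≤ ‖z i‖ ^ 2 := by gcongr
    _ = z i ^ 2 := by simp
    _ ≤ ∑ i, z i ^ 2 := Finset.single_le_sum (fun j _ => sq_nonneg (z j)) (Finset.mem_univ i)

theorem hasCompactSupport_of_norm_le {G : Type*} [Zero G] {R : ℝ} {f : (ι → ℝ) → G}
    (hf : ∀ z, R ≤ ‖z‖ → f z = 0) : HasCompactSupport f :=
  .intro (isCompact_closedBall 0 R) fun z hz =>
    hf z (le_of_not_ge (by simpa using hz))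

theorem exists_contDiff_eqOn_ball {u : (ι → ℝ) → F} {n : ℕ∞} {x₀ : ι → ℝ} {r R : ℝ}
    (hr : 0 < r) (hrR : r < R) {W : Set (ι → ℝ)} (hW : IsOpen W)
    (hRW : Metric.closedBall x₀ R ⊆ W) (hu : ContDiffOn ℝ n u W) :
    ∃ U : (ι → ℝ) → F, ContDiff ℝ n U ∧ Set.EqOn U u (Metric.ball x₀ r) := by
  let χ : ContDiffBump x₀ := ⟨r, R, hr, hrR⟩
  refine ⟨fun x => χ x • u x, contDiff_iff_contDiffAt.2 fun x => ?_, fun x hx => ?_⟩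
  · by_cases hx : x ∈ W
    · exact χ.contDiff.contDiffAt.smul (hu.contDiffAt (hW.mem_nhds hx))
    · have : (fun x => χ x • u x) =ᶠ[𝓝 x] fun _ => 0 := by
        filter_upwards [(Metric.isClosed_closedBall.isOpen_compl).mem_nhds fun h => hx (hRW h)]
          with y hy
        simp [χ.zero_of_le_dist (le_of_not_ge hy)]
      exact contDiffAt_const.congr_of_eventuallyEq this
  · simp [χ.one_of_mem_closedBall (Metric.ball_subset_closedBall hx)]

variable [DecidableEq ι]

theorem integral_smul_pderiv_eq_neg {ψ : (ι → ℝ) → ℝ} (hψ : ContDiff ℝ 1 ψ)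
    (hψc : HasCompactSupport ψ) {g : (ι → ℝ) → F} (hg : ContDiff ℝ 1 g) (i : ι) :
    ∫ z, ψ z • pderiv i g z = -∫ z, pderiv i ψ z • g z := by
  refine integral_smul_fderiv_eq_neg_fderiv_smul_of_integrable ?_ ?_ ?_
    (fun z _ => hψ.differentiable one_ne_zero z) (fun z _ => hg.differentiable one_ne_zero z)
  · exact ((contDiff_pderiv (n := 0) (by simpa using hψ) i).continuous.smul
      hg.continuous).integrable_of_hasCompactSupport (hψc.fderiv_apply ℝ _).smul_right
  · exact (hψ.continuous.smul (contDiff_pderiv (n := 0) (by simpa using hg)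
      i).continuous).integrable_of_hasCompactSupport hψc.smul_right
  · exact (hψ.continuous.smul hg.continuous).integrable_of_hasCompactSupport hψc.smul_right

theorem pderiv_comp_sub_smul {g : (ι → ℝ) → F} (hg : Differentiable ℝ g) (x : ι → ℝ) (t : ℝ)
    (i : ι) (z : ι → ℝ) :
    pderiv i (fun z => g (x - t • z)) z = -t • pderiv i g (x - t • z) := by
  have hline : HasFDerivAt (fun z : ι → ℝ => x - t • z)
      (-(t • ContinuousLinearMap.id ℝ (ι → ℝ))) z :=
    ((hasFDerivAt_id z).const_smul t).const_sub x
  have := ((hg (x - t • z)).hasFDerivAt.comp z hline).fderiv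
  simp only [Function.comp_def] at this
  simp [pderiv, this]

theorem hasDerivAt_comp_sub_smul {g : (ι → ℝ) → F} (hg : Differentiable ℝ g) (x z : ι → ℝ)
    (t : ℝ) :
    HasDerivAt (fun t : ℝ => g (x - t • z)) (-∑ i, z i • pderiv i g (x - t • z)) t := by
  have hline : HasDerivAt (fun t : ℝ => x - t • z) (-z) t := by
    simpa using ((hasDerivAt_id t).smul_const z).const_sub x
  have := (hg (x - t • z)).hasFDerivAt.comp_hasDerivAt t hline
  rwa [map_neg, fderiv_eq_sum_pderiv] at this

theorem hasDerivAt_integral_smul_comp_sub_smul {φ ψ : (ι → ℝ) → ℝ} (hφ : Continuous φ)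
    (hφc : HasCompactSupport φ) (hψ : ContDiff ℝ 1 ψ) (hψc : HasCompactSupport ψ)
    (hφψ : ∀ i z, pderiv i ψ z = z i * φ z) {U : (ι → ℝ) → F} (hU : ContDiff ℝ 2 U)
    (x : ι → ℝ) (t : ℝ) :
    HasDerivAt (fun t : ℝ => ∫ z, φ z • U (x - t • z))
      (-t • ∫ z, ψ z • laplacian U (x - t • z)) t := by
  have hU' : ContDiff ℝ (1 + 1) U := by rwa [one_add_one_eq_two]
  have hpderiv (i : ι) : ContDiff ℝ 1 (pderiv i U) := contDiff_pderiv hU' i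
  have hscale : Continuous fun q : ℝ × (ι → ℝ) => x - q.1 • q.2 := by fun_prop
  convert hasDerivAt_integral_smul_of_hasCompactSupport hφ hφc
    (g := fun t z => U (x - t • z)) (g' := fun t z => -∑ i, z i • pderiv i U (x - t • z))
    (hU.continuous.comp hscale)
    (.neg (continuous_finsetSum _ fun i _ => ((continuous_apply i).comp continuous_snd).smul
      ((hpderiv i).continuous.comp hscale)))
    (fun t z => hasDerivAt_comp_sub_smul (hU.differentiable two_ne_zero) x z t) t using 1
  have hint {χ : (ι → ℝ) → ℝ} (hχ : Continuous χ) (hχc : HasCompactSupport χ)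
      {h : (ι → ℝ) → F} (hh : Continuous h) :
      Integrable (fun z => χ z • h (x - t • z)) :=
    (hχ.smul (hh.comp (by fun_prop))).integrable_of_hasCompactSupport hχc.smul_right
  have hparts (i : ι) : ∫ z, (z i * φ z) • pderiv i U (x - t • z) =
      t • ∫ z, ψ z • pderiv i (pderiv i U) (x - t • z) := by
    have := integral_smul_pderiv_eq_neg hψ hψc
      (g := fun z => pderiv i U (x - t • z)) ((hpderiv i).comp (by fun_prop)) i
    simp only [pderiv_comp_sub_smul ((hpderiv i).differentiable one_ne_zero), hφψ,
      smul_comm _ (-t), integral_smul] at this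
    rw [neg_smul, neg_inj] at this
    exact this.symm
  have hφi (i : ι) : Continuous fun z : ι → ℝ => z i * φ z := by fun_prop
  calc -t • ∫ z, ψ z • laplacian U (x - t • z)
      = -∑ i, t • ∫ z, ψ z • pderiv i (pderiv i U) (x - t • z) := by
        simp only [laplacian, Finset.smul_sum]
        rw [integral_finsetSum _ fun i _ => hint hψ.continuous hψc
          (continuous_pderiv_pderiv hU i i), Finset.smul_sum]
        simp
    _ = -∑ i, ∫ z, (z i * φ z) • pderiv i U (x - t • z) := by simp only [hparts]
    _ = ∫ z, φ z • -∑ i, z i • pderiv i U (x - t • z) := by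
        rw [← integral_finsetSum _ fun i _ => hint (hφi i) hφc.mul_left (hpderiv i).continuous,
          ← integral_neg]
        simp only [smul_neg, Finset.smul_sum, smul_smul, mul_comm]

theorem pderiv_comp_sum_sq {P : ℝ → ℝ} {P' : ℝ} {z : ι → ℝ}
    (hP : HasDerivAt P P' (∑ j, z j ^ 2)) (i : ι) :
    pderiv i (fun z => P (∑ j, z j ^ 2)) z = z i * (2 * P') := by
  have := (hP.comp_hasFDerivAt z (hasFDerivAt_sum_sq Finset.univ z)).fderiv
  simp only [Function.comp_def] at this
  simp [pderiv, this, Pi.single_apply]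
  ring

theorem exists_radial_mollifier {R : ℝ} (hR : 0 < R) :
    ∃ φ ψ : (ι → ℝ) → ℝ, ContDiff ℝ ∞ φ ∧ HasCompactSupport φ ∧ 0 < ∫ z, φ z ∧
      ContDiff ℝ 1 ψ ∧ (∀ z, R ≤ ‖z‖ → ψ z = 0) ∧ ∀ i z, pderiv i ψ z = z i * φ z := by
  set η : ℝ → ℝ := fun s => Real.smoothTransition (R ^ 2 - s)
  set P : ℝ → ℝ := fun s => ∫ t in (R ^ 2)..s, η t
  have hη : ContDiff ℝ ∞ η := Real.smoothTransition.contDiff.comp (by fun_prop)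
  have hη_zero {s : ℝ} (hs : R ^ 2 ≤ s) : η s = 0 :=
    Real.smoothTransition.zero_of_nonpos (by linarith)
  have hP (s : ℝ) : HasDerivAt P (η s) s :=
    (hη.continuous.integral_hasStrictDerivAt _ s).hasDerivAt
  have hP_zero {s : ℝ} (hs : R ^ 2 ≤ s) : P s = 0 :=
    intervalIntegral.integral_zero_ae (.of_forall fun t ht => hη_zero (by
      rw [Set.uIoc_of_le hs] at ht; exact ht.1.le))
  have hP_contDiff : ContDiff ℝ 1 P :=
    contDiff_one_iff_deriv.2 ⟨fun s => (hP s).differentiableAt, by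
      simpa [funext fun s => (hP s).deriv] using hη.continuous⟩
  have hφ : ContDiff ℝ ∞ fun z : ι → ℝ => 2 * η (∑ i, z i ^ 2) :=
    contDiff_const.mul (hη.comp (by fun_prop))
  have hφc : HasCompactSupport fun z : ι → ℝ => 2 * η (∑ i, z i ^ 2) :=
    hasCompactSupport_of_norm_le (R := R) fun z hz => by simp [hη_zero (sq_le_sum_sq hR hz)]
  refine ⟨fun z => 2 * η (∑ i, z i ^ 2), fun z => P (∑ i, z i ^ 2), hφ, hφc, ?_,
    hP_contDiff.comp (by fun_prop), fun z hz => hP_zero (sq_le_sum_sq hR hz),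
    fun i z => pderiv_comp_sum_sq (hP _) i⟩
  refine hφ.continuous.integral_pos_of_hasCompactSupport_nonneg_nonzero (x := 0) hφc
    (fun z => mul_nonneg zero_le_two (Real.smoothTransition.nonneg _)) (mul_pos two_pos ?_).ne'
  exact Real.smoothTransition.pos_of_pos (by simpa using pow_pos hR 2)

theorem integral_radial_smul_eq [CompleteSpace F] {φ ψ : (ι → ℝ) → ℝ} {R : ℝ} (hφ : Continuous φ)
    (hφc : HasCompactSupport φ) (hψ : ContDiff ℝ 1 ψ) (hψR : ∀ z, R ≤ ‖z‖ → ψ z = 0)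
    (hφψ : ∀ i z, pderiv i ψ z = z i * φ z) {U : (ι → ℝ) → F} (hU : ContDiff ℝ 2 U)
    {x : ι → ℝ} (hΔ : ∀ y ∈ Metric.ball x R, laplacian U y = 0) :
    ∫ z, φ z • U (x - z) = (∫ z, φ z) • U x := by
  have hderiv (t : ℝ) := hasDerivAt_integral_smul_comp_sub_smul hφ hφc hψ
    (hasCompactSupport_of_norm_le hψR) hφψ hU x t
  have hzero (t : ℝ) (ht : t ∈ Set.Ico (0 : ℝ) 1) :
      -t • ∫ z, ψ z • laplacian U (x - t • z) = 0 := by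
    rw [integral_eq_zero_of_ae (.of_forall fun z => ?_), smul_zero]
    rcases le_or_gt R ‖z‖ with hz | hz
    · simp [hψR z hz]
    · have hball : x - t • z ∈ Metric.ball x R := by
        rw [mem_ball_iff_norm, sub_sub_cancel_left, norm_neg, norm_smul,
          Real.norm_of_nonneg ht.1]
        exact (mul_le_of_le_one_left (norm_nonneg z) ht.2.le).trans_lt hz
      simp [hΔ _ hball]
  have := constant_of_has_deriv_right_zero
    (fun t _ => (hderiv t).continuousAt.continuousWithinAt)
    (fun t ht => (hzero t ht ▸ hderiv t).hasDerivWithinAt) 1 (Set.right_mem_Icc.2 zero_le_one)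
  simpa [integral_smul_const] using this

/- Weyl's lemma: a harmonic function equals its mean against a smooth radial kernel. -/
theorem contDiffOn_of_laplacian_eq_zero [CompleteSpace F] {u : (ι → ℝ) → F} {W : Set (ι → ℝ)}
    (hW : IsOpen W) (hu : ContDiffOn ℝ 2 u W) (hΔ : ∀ x ∈ W, laplacian u x = 0) :
    ContDiffOn ℝ ∞ u W := by
  intro x₀ hx₀
  obtain ⟨R, hR, hRW⟩ : ∃ R > 0, Metric.closedBall x₀ (3 * R) ⊆ W := by
    obtain ⟨ρ, hρ, hρW⟩ := Metric.isOpen_iff.1 hW x₀ hx₀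
    exact ⟨ρ / 4, by positivity, (Metric.closedBall_subset_ball (by linarith)).trans hρW⟩
  have hball : Metric.ball x₀ (2 * R) ⊆ W :=
    (Metric.ball_subset_closedBall.trans (Metric.closedBall_subset_closedBall (by linarith))).trans
      hRW
  obtain ⟨U, hU, hUu⟩ := exists_contDiff_eqOn_ball (n := 2) (r := 2 * R) (by positivity)
    (by linarith) hW hRW hu
  obtain ⟨φ, ψ, hφ, hφc, hφpos, hψ, hψR, hφψ⟩ := exists_radial_mollifier (ι := ι) hR
  have hΔU (y : ι → ℝ) (hy : y ∈ Metric.ball x₀ (2 * R)) : laplacian U y = 0 := by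
    rw [laplacian_congr (hUu.eventuallyEq_of_mem (Metric.isOpen_ball.mem_nhds hy)), hΔ y (hball hy)]
  have hmean {x : ι → ℝ} (hx : x ∈ Metric.ball x₀ R) :
      u x = (∫ z, φ z)⁻¹ • ∫ z, φ z • U (x - z) := by
    rw [integral_radial_smul_eq hφ.continuous hφc hψ hψR hφψ hU fun y hy => hΔU y
        (Metric.ball_subset (by rw [Metric.mem_ball] at hx; linarith) hy),
      inv_smul_smul₀ hφpos.ne', hUu (Metric.ball_subset_ball (by linarith) hx)]
  have hsmooth : ContDiff ℝ ∞ fun x => (∫ z, φ z)⁻¹ • ∫ z, φ z • U (x - z) :=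
    (hφc.contDiff_convolution_left (ContinuousLinearMap.lsmul ℝ ℝ) hφ
      hU.continuous.locallyIntegrable).const_smul _
  exact (hsmooth.contDiffAt.congr_of_eventuallyEq
    (Filter.eventuallyEq_of_mem (Metric.ball_mem_nhds x₀ hR) fun x hx => hmean hx)).contDiffWithinAt

end Weyl

section Laplacian

variable {ι F G H : Type*} [Fintype ι] [DecidableEq ι] [NormedAddCommGroup F] [NormedSpace ℝ F]
  [NormedAddCommGroup G] [NormedSpace ℝ G] [NormedAddCommGroup H] [NormedSpace ℝ H]

theorem laplacian_eq_sum_fderiv_fderiv {f : (ι → ℝ) → F} {x : ι → ℝ}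
    (hf : DifferentiableAt ℝ (fderiv ℝ f) x) :
    laplacian f x = ∑ i, fderiv ℝ (fderiv ℝ f) x (Pi.single i 1) (Pi.single i 1) :=
  Finset.sum_congr rfl fun i _ =>
    (DFunLike.congr_fun (hf.hasFDerivAt.clm_apply (hasFDerivAt_const (Pi.single i 1) x)).fderiv
      (Pi.single i 1)).trans (by simp)

theorem pderiv_bilin (B : F →L[ℝ] G →L[ℝ] H) {f : (ι → ℝ) → F} {g : (ι → ℝ) → G} {x : ι → ℝ}
    (hf : DifferentiableAt ℝ f x) (hg : DifferentiableAt ℝ g x) (i : ι) :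
    pderiv i (fun y => B (f y) (g y)) x = B (pderiv i f x) (g x) + B (f x) (pderiv i g x) := by
  simp [pderiv, (B.hasFDerivAt_of_bilinear hf.hasFDerivAt hg.hasFDerivAt).fderiv, add_comm]

theorem contDiffAt_pderiv {n : WithTop ℕ∞} {f : (ι → ℝ) → F} {x : ι → ℝ}
    (hf : ContDiffAt ℝ (n + 1) f x) (i : ι) : ContDiffAt ℝ n (pderiv i f) x :=
  (hf.fderiv_right le_rfl).clm_apply contDiffAt_const

theorem differentiableAt_pderiv {f : (ι → ℝ) → F} {x : ι → ℝ} (hf : ContDiffAt ℝ 2 f x) (i : ι) :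
    DifferentiableAt ℝ (pderiv i f) x :=
  (contDiffAt_pderiv (n := 1) (by rwa [one_add_one_eq_two]) i).differentiableAt one_ne_zero

theorem laplacian_bilin (B : F →L[ℝ] G →L[ℝ] H) {f : (ι → ℝ) → F} {g : (ι → ℝ) → G}
    {x : ι → ℝ} (hf : ContDiffAt ℝ 2 f x) (hg : ContDiffAt ℝ 2 g x) :
    laplacian (fun y => B (f y) (g y)) x =
      B (laplacian f x) (g x) + (2 : ℝ) • ∑ i, B (pderiv i f x) (pderiv i g x) +
        B (f x) (laplacian g x) := by
  have hterm (i : ι) : pderiv i (pderiv i fun y => B (f y) (g y)) x =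
      B (pderiv i (pderiv i f) x) (g x) + (2 : ℝ) • B (pderiv i f x) (pderiv i g x) +
        B (f x) (pderiv i (pderiv i g) x) := by
    have hfirst : pderiv i (fun y => B (f y) (g y)) =ᶠ[𝓝 x]
        fun y => B (pderiv i f y) (g y) + B (f y) (pderiv i g y) := by
      filter_upwards [hf.eventually (by simp), hg.eventually (by simp)] with y hfy hgy
      exact pderiv_bilin B (hfy.differentiableAt two_ne_zero) (hgy.differentiableAt two_ne_zero) i
    have hf₀ := hf.differentiableAt two_ne_zero
    have hg₀ := hg.differentiableAt two_ne_zero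
    have hf₁ := differentiableAt_pderiv hf i
    have hg₁ := differentiableAt_pderiv hg i
    rw [pderiv, hfirst.fderiv_eq, fderiv_fun_add
      (B.hasFDerivAt_of_bilinear hf₁.hasFDerivAt hg₀.hasFDerivAt).differentiableAt
      (B.hasFDerivAt_of_bilinear hf₀.hasFDerivAt hg₁.hasFDerivAt).differentiableAt,
      add_apply, ← pderiv, ← pderiv, pderiv_bilin B hf₁ hg₀,
      pderiv_bilin B hf₀ hg₁, two_smul]
    abel
  simp only [laplacian, hterm, Finset.sum_add_distrib, map_sum, sum_apply,
    Finset.smul_sum]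

theorem laplacian_const (c : F) (x : ι → ℝ) : laplacian (fun _ => c) x = 0 := by
  have hzero (i : ι) : pderiv i (fun _ => c) = fun _ => 0 := by ext; simp [pderiv]
  simp [laplacian, hzero, pderiv]

theorem laplacian_clm_comp (T : F →L[ℝ] G) {f : (ι → ℝ) → F} {x : ι → ℝ}
    (hf : ContDiffAt ℝ 2 f x) : laplacian (fun x => T (f x)) x = T (laplacian f x) := by
  have h := laplacian_bilin (.id ℝ (F →L[ℝ] G)) (contDiffAt_const (c := T)) hf
  simpa [laplacian_const, pderiv] using h

theorem laplacian_clm (L : (ι → ℝ) →L[ℝ] F) (x : ι → ℝ) : laplacian (fun x => L x) x = 0 := by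
  have hconst (i : ι) : pderiv i (fun x => L x) = fun _ => L (Pi.single i 1) := by
    ext; simp [pderiv]
  simp [laplacian, hconst, pderiv]

end Laplacian

section CliffordMap

variable {E ι R : Type*} [NormedAddCommGroup E] [NormedSpace ℝ E] [Fintype ι] [NormedRing R]
  [NormedAlgebra ℝ R]

theorem fderiv_clm_pow_apply (a : E →L[ℝ] R) (n : ℕ) (x z : E) :
    fderiv ℝ (fun x => a x ^ n) x z = ∑ i ∈ Finset.range n, a x ^ (n - 1 - i) * a z * a x ^ i := by
  have := ((a.hasFDerivAt (x := x)).pow' n).fderiv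
  simp only [Pi.pow_def] at this
  simp [this, mul_assoc]

theorem fderiv_clm_pow_self (a : E →L[ℝ] R) (n : ℕ) (x : E) :
    fderiv ℝ (fun x => a x ^ n) x x = (n : ℝ) • a x ^ n := by
  have hterm (i : ℕ) (hi : i ∈ Finset.range n) : a x ^ (n - 1 - i) * a x * a x ^ i = a x ^ n := by
    rw [← pow_succ, ← pow_add]
    congr 1
    have := Finset.mem_range.1 hi
    omega
  rw [fderiv_clm_pow_apply, Finset.sum_congr rfl hterm]
  simp [Nat.cast_smul_eq_nsmul]

variable [DecidableEq ι]

/-- `a(x) = ∑_{i ∈ σ} xᵢ Jᵢ` with `a(x)² = -∑_{i ∈ σ} xᵢ²`, i.e. the `Jᵢ` are anticommuting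
square roots of `-1`. The paper's `x_q` is of this kind, as the operator of left multiplication:
operators compose associatively although the alternative algebra itself need not be associative. -/
structure IsCliffordMap (σ : Finset ι) (a : (ι → ℝ) →L[ℝ] R) : Prop where
  map_single : ∀ i ∉ σ, a (Pi.single i 1) = 0
  sq_eq : ∀ x, a x ^ 2 = -(∑ i ∈ σ, x i ^ 2) • (1 : R)

/-- The constants in `Δ x_q^(n+2) = -lapCoeff q n • x_q^n`, `x_q ∈ ℝ^q`. -/
def lapCoeff (q : ℕ) : ℕ → ℝ
  | 0 => 2 * q
  | 1 => 2 * q + 4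
  | n + 2 => lapCoeff q n + (2 * q + 4 * (n + 2))

theorem pderiv_sum_sq (σ : Finset ι) (i : ι) (x : ι → ℝ) :
    pderiv i (fun x : ι → ℝ => ∑ j ∈ σ, x j ^ 2) x = if i ∈ σ then 2 * x i else 0 := by
  simp [pderiv, (hasFDerivAt_sum_sq σ x).fderiv, Pi.single_apply]

theorem laplacian_sum_sq (σ : Finset ι) (x : ι → ℝ) :
    laplacian (fun x : ι → ℝ => ∑ j ∈ σ, x j ^ 2) x = 2 * σ.card := by
  have (i : ι) : pderiv i (fun x : ι → ℝ => if i ∈ σ then 2 * x i else 0) x =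
      if i ∈ σ then 2 else 0 := by
    split_ifs
    · simp [pderiv, ((hasFDerivAt_apply (𝕜 := ℝ) i x).const_mul 2).fderiv]
    · simp [pderiv]
  simp only [laplacian, funext (pderiv_sum_sq σ _), this]
  simp [mul_comm]

namespace IsCliffordMap

variable {σ : Finset ι} {a : (ι → ℝ) →L[ℝ] R} (ha : IsCliffordMap σ a)
include ha

theorem pderiv_pow_eq_zero {i : ι} (hi : i ∉ σ) (n : ℕ) (x : ι → ℝ) :
    pderiv i (fun x => a x ^ n) x = 0 := by
  simp [pderiv, fderiv_clm_pow_apply, ha.map_single i hi]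

theorem sum_smul_pderiv_pow (n : ℕ) (x : ι → ℝ) :
    ∑ i ∈ σ, x i • pderiv i (fun x => a x ^ n) x = (n : ℝ) • a x ^ n := by
  rw [← fderiv_clm_pow_self, fderiv_eq_sum_pderiv]
  exact Finset.sum_subset σ.subset_univ fun i _ hi => by simp [ha.pderiv_pow_eq_zero hi]

theorem laplacian_pow_add_two (n : ℕ) (x : ι → ℝ) :
    laplacian (fun x => a x ^ (n + 2)) x =
      -(2 * σ.card + 4 * n : ℝ) • a x ^ n -
        (∑ i ∈ σ, x i ^ 2) • laplacian (fun x => a x ^ n) x := by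
  have hpow : (fun x => a x ^ (n + 2)) =
      fun x =>
        (-ContinuousLinearMap.lsmul ℝ ℝ : ℝ →L[ℝ] R →L[ℝ] R) (∑ i ∈ σ, x i ^ 2) (a x ^ n) := by
    ext x
    simp [pow_add, ha.sq_eq, ← Finset.sum_smul]
  have hcross : ∑ i, (if i ∈ σ then 2 * x i else 0) • pderiv i (fun x => a x ^ n) x =
      (2 * n : ℝ) • a x ^ n := by
    simp [ite_smul, mul_smul, ← Finset.smul_sum, ha.sum_smul_pderiv_pow]
  rw [hpow, laplacian_bilin _ (by fun_prop) (a.contDiff.pow n).contDiffAt, laplacian_sum_sq]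
  simp only [pderiv_sum_sq, neg_apply, ContinuousLinearMap.lsmul_apply, Finset.sum_neg_distrib,
    hcross]
  module

theorem laplacian_pow (n : ℕ) (x : ι → ℝ) :
    laplacian (fun x => a x ^ (n + 2)) x = -lapCoeff σ.card n • a x ^ n := by
  induction n using Nat.twoStepInduction with
  | zero => simp [ha.laplacian_pow_add_two, lapCoeff, laplacian_const]
  | one => simp [ha.laplacian_pow_add_two, lapCoeff, laplacian_clm]
  | more n ih _ =>
    rw [ha.laplacian_pow_add_two, ih, lapCoeff, pow_add, ha.sq_eq, mul_smul_comm, mul_one]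
    push_cast
    module

end IsCliffordMap
end CliffordMap

section SecondOrderSeries

variable {E F : Type*} [NormedAddCommGroup E] [NormedSpace ℝ E] [NormedAddCommGroup F]
  [NormedSpace ℝ F] {s : Set E} {u : ℕ → E → F} {c : ℕ → ℝ}

theorem norm_le_of_norm_iteratedFDeriv_le (hb : ∀ k, ∀ i ≤ 2, ∀ x ∈ s,
    ‖iteratedFDeriv ℝ i (u k) x‖ ≤ c k) (k : ℕ) {x : E} (hx : x ∈ s) :
    ‖u k x‖ ≤ c k ∧ ‖fderiv ℝ (u k) x‖ ≤ c k ∧ ‖fderiv ℝ (fderiv ℝ (u k)) x‖ ≤ c k := by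
  refine ⟨by simpa using hb k 0 zero_le_two x hx, ?_, ?_⟩
  · simpa [norm_iteratedFDeriv_one] using hb k 1 one_le_two x hx
  · simpa [← norm_iteratedFDeriv_fderiv, norm_iteratedFDeriv_one] using hb k 2 le_rfl x hx

theorem contDiffOn_two_iff_fderiv {f : E → F} (hs : IsOpen s) :
    ContDiffOn ℝ 2 f s ↔ DifferentiableOn ℝ f s ∧ ContDiffOn ℝ 1 (fderiv ℝ f) s := by
  rw [← one_add_one_eq_two, contDiffOn_succ_iff_fderiv_of_isOpen hs]
  simp

theorem differentiableAt_fderiv_of_contDiffOn {f : E → F} (hs : IsOpen s)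
    (hf : ContDiffOn ℝ 2 f s) {x : E} (hx : x ∈ s) : DifferentiableAt ℝ (fderiv ℝ f) x :=
  (((contDiffOn_two_iff_fderiv hs).1 hf).2.differentiableOn one_ne_zero).differentiableAt
    (hs.mem_nhds hx)

variable [CompleteSpace F]

theorem hasFDerivAt_tsum_of_norm_le (hs : IsOpen s) (hs' : IsPreconnected s) (hc : Summable c)
    (hu : ∀ k, DifferentiableOn ℝ (u k) s) (hb₀ : ∀ k, ∀ x ∈ s, ‖u k x‖ ≤ c k)
    (hb₁ : ∀ k, ∀ x ∈ s, ‖fderiv ℝ (u k) x‖ ≤ c k) {x : E} (hx : x ∈ s) :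
    HasFDerivAt (fun x => ∑' k, u k x) (∑' k, fderiv ℝ (u k) x) x :=
  hasFDerivAt_tsum_of_isPreconnected hc hs hs'
    (fun k _ hy => ((hu k).differentiableAt (hs.mem_nhds hy)).hasFDerivAt) hb₁ hx
    (.of_norm_bounded hc fun k => hb₀ k x hx) hx

theorem contDiffOn_one_tsum (hs : IsOpen s) (hs' : IsPreconnected s) (hc : Summable c)
    (hu : ∀ k, ContDiffOn ℝ 1 (u k) s) (hb₀ : ∀ k, ∀ x ∈ s, ‖u k x‖ ≤ c k)
    (hb₁ : ∀ k, ∀ x ∈ s, ‖fderiv ℝ (u k) x‖ ≤ c k) :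
    ContDiffOn ℝ 1 (fun x => ∑' k, u k x) s := by
  have hderiv {x : E} (hx : x ∈ s) := hasFDerivAt_tsum_of_norm_le hs hs' hc
    (fun k => (hu k).differentiableOn one_ne_zero) hb₀ hb₁ hx
  refine (contDiffOn_succ_iff_fderiv_of_isOpen (n := 0) hs).2
    ⟨fun x hx => (hderiv hx).differentiableAt.differentiableWithinAt, by simp, ?_⟩
  refine contDiffOn_zero.2 (.congr (continuousOn_tsum (fun k => ?_) hc hb₁)
    fun x hx => (hderiv hx).fderiv)
  exact (hu k).continuousOn_fderiv_of_isOpen hs le_rfl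

theorem contDiffOn_two_tsum (hs : IsOpen s) (hs' : IsPreconnected s) (hc : Summable c)
    (hu : ∀ k, ContDiffOn ℝ 2 (u k) s)
    (hb : ∀ k, ∀ i ≤ 2, ∀ x ∈ s, ‖iteratedFDeriv ℝ i (u k) x‖ ≤ c k) :
    ContDiffOn ℝ 2 (fun x => ∑' k, u k x) s ∧ ∀ x ∈ s,
      HasSum (fun k => fderiv ℝ (fderiv ℝ (u k)) x)
        (fderiv ℝ (fderiv ℝ fun x => ∑' k, u k x) x) := by
  have hb' (k : ℕ) {x : E} (hx : x ∈ s) := norm_le_of_norm_iteratedFDeriv_le hb k hx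
  have hu' (k : ℕ) := (contDiffOn_two_iff_fderiv hs).1 (hu k)
  have hfst {x : E} (hx : x ∈ s) := hasFDerivAt_tsum_of_norm_le hs hs' hc (fun k => (hu' k).1)
    (fun k x hx => (hb' k hx).1) (fun k x hx => (hb' k hx).2.1) hx
  have hsnd {x : E} (hx : x ∈ s) := hasFDerivAt_tsum_of_norm_le hs hs' hc
    (fun k => (hu' k).2.differentiableOn one_ne_zero) (fun k x hx => (hb' k hx).2.1)
    (fun k x hx => (hb' k hx).2.2) hx
  have hfderiv : Set.EqOn (fderiv ℝ fun x => ∑' k, u k x) (fun x => ∑' k, fderiv ℝ (u k) x) s :=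
    fun x hx => (hfst hx).fderiv
  refine ⟨(contDiffOn_two_iff_fderiv hs).2
    ⟨fun x hx => (hfst hx).differentiableAt.differentiableWithinAt, ?_⟩, fun x hx => ?_⟩
  · exact (contDiffOn_one_tsum hs hs' hc (fun k => (hu' k).2) (fun k x hx => (hb' k hx).2.1)
      fun k x hx => (hb' k hx).2.2).congr hfderiv
  · rw [(hfderiv.eventuallyEq_of_mem (hs.mem_nhds hx)).fderiv_eq, (hsnd hx).fderiv]
    have : Summable fun k => fderiv ℝ (fderiv ℝ (u k)) x :=
      .of_norm_bounded (E := E →L[ℝ] E →L[ℝ] F) hc fun k => (hb' k hx).2.2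
    exact this.hasSum

theorem hasSum_laplacian {ι : Type*} [Fintype ι] [DecidableEq ι] {s : Set (ι → ℝ)}
    {u : ℕ → (ι → ℝ) → F} (hs : IsOpen s) (hs' : IsPreconnected s) (hc : Summable c)
    (hu : ∀ k, ContDiffOn ℝ 2 (u k) s)
    (hb : ∀ k, ∀ i ≤ 2, ∀ x ∈ s, ‖iteratedFDeriv ℝ i (u k) x‖ ≤ c k) {x : ι → ℝ} (hx : x ∈ s) :
    HasSum (fun k => laplacian (u k) x) (laplacian (fun x => ∑' k, u k x) x) := by
  obtain ⟨hsum, hderiv⟩ := contDiffOn_two_tsum hs hs' hc hu hb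
  simp only [laplacian_eq_sum_fderiv_fderiv (differentiableAt_fderiv_of_contDiffOn hs hsum hx),
    fun k => laplacian_eq_sum_fderiv_fderiv (differentiableAt_fderiv_of_contDiffOn hs (hu k) hx)]
  exact hasSum_sum fun i _ => ((hderiv x hx).mapL (.apply ℝ _ (Pi.single i 1))).mapL
    (.apply ℝ _ (Pi.single i 1))

end SecondOrderSeries

section DerivBounds

variable {E F G H : Type*} [NormedAddCommGroup E] [NormedSpace ℝ E] [NormedAddCommGroup F]
  [NormedSpace ℝ F] [NormedAddCommGroup G] [NormedSpace ℝ G] [NormedAddCommGroup H]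
  [NormedSpace ℝ H]

/-- `f` is `C^N` on `s` with `‖Dⁱf‖ ≤ ε τⁱ` there for all `i ≤ N`: Cauchy estimates that are stable
under products, used to differentiate series term by term. -/
structure HasDerivBound (N : ℕ) (s : Set E) (τ ε : ℝ) (f : E → F) : Prop where
  contDiffOn : ContDiffOn ℝ N f s
  norm_le : ∀ i ≤ N, ∀ x ∈ s, ‖iteratedFDerivWithin ℝ i f s x‖ ≤ ε * τ ^ i

namespace HasDerivBound

variable {N : ℕ} {s : Set E} {τ : ℝ} (hs : IsOpen s) (hτ : 0 ≤ τ)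

include hs hτ in
theorem bilin {ε₁ ε₂ : ℝ} (h₁ : 0 ≤ ε₁) (h₂ : 0 ≤ ε₂) {f : E → F} {g : E → G}
    (hf : HasDerivBound N s τ ε₁ f) (hg : HasDerivBound N s τ ε₂ g) {B : F →L[ℝ] G →L[ℝ] H}
    (hB : ‖B‖ ≤ 1) : HasDerivBound N s τ (2 ^ N * ε₁ * ε₂) fun x => B (f x) (g x) := by
  refine ⟨(B.contDiff.comp_contDiffOn hf.contDiffOn).clm_apply hg.contDiffOn,
    fun i hi x hx => ?_⟩
  have hterm (j : ℕ) (hj : j ∈ Finset.range (i + 1)) :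
      (i.choose j : ℝ) * ‖iteratedFDerivWithin ℝ j f s x‖ *
        ‖iteratedFDerivWithin ℝ (i - j) g s x‖ ≤ i.choose j * (ε₁ * ε₂ * τ ^ i) := by
    have hji : j ≤ i := Nat.lt_succ_iff.1 (Finset.mem_range.1 hj)
    have := hf.norm_le j (hji.trans hi) x hx
    have := hg.norm_le (i - j) ((Nat.sub_le i j).trans hi) x hx
    calc _ ≤ (i.choose j : ℝ) * (ε₁ * τ ^ j) * (ε₂ * τ ^ (i - j)) := by gcongr
      _ = i.choose j * (ε₁ * ε₂ * τ ^ i) := by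
        rw [← pow_mul_pow_sub τ hji]; ring
  calc ‖iteratedFDerivWithin ℝ i (fun x => B (f x) (g x)) s x‖
      ≤ ∑ j ∈ Finset.range (i + 1), (i.choose j : ℝ) * (ε₁ * ε₂ * τ ^ i) :=
        (B.norm_iteratedFDerivWithin_le_of_bilinear_of_le_one hf.contDiffOn hg.contDiffOn
          hs.uniqueDiffOn hx (by exact_mod_cast hi) hB).trans (Finset.sum_le_sum hterm)
    _ = 2 ^ i * (ε₁ * ε₂ * τ ^ i) := by
        rw [← Finset.sum_mul, ← Nat.cast_sum, Nat.sum_range_choose]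
        push_cast
        rfl
    _ ≤ 2 ^ N * ε₁ * ε₂ * τ ^ i := by
        rw [mul_assoc (2 ^ N), mul_assoc (2 ^ N)]
        gcongr
        exact one_le_two

include hs hτ in
theorem const (c : F) : HasDerivBound N s τ ‖c‖ fun _ => c := by
  refine ⟨contDiffOn_const, fun i _ x hx => ?_⟩
  rw [iteratedFDerivWithin_of_isOpen i hs hx]
  rcases Nat.eq_zero_or_pos i with rfl | hi
  · simp
  · rw [iteratedFDeriv_const_of_ne hi.ne']
    simpa using by positivity

include hs hτ in
theorem clm {ρ : ℝ} (hρ : 0 ≤ ρ) (L : E →L[ℝ] F) (h₀ : ∀ x ∈ s, ‖L x‖ ≤ ρ) (h₁ : ‖L‖ ≤ ρ * τ) :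
    HasDerivBound N s τ ρ L := by
  refine ⟨L.contDiff.contDiffOn, fun i _ x hx => ?_⟩
  rw [iteratedFDerivWithin_of_isOpen i hs hx]
  match i with
  | 0 => simpa using h₀ x hx
  | 1 => simpa [norm_iteratedFDeriv_one] using h₁
  | i + 2 =>
    have hconst : fderiv ℝ L = fun _ => L := funext fun x => L.fderiv
    rw [← norm_iteratedFDeriv_fderiv, hconst, iteratedFDeriv_const_of_ne i.succ_ne_zero]
    simpa using by positivity

include hs hτ in
theorem pow {ρ : ℝ} (hρ : 0 ≤ ρ) {a : E → F →L[ℝ] F} (ha : HasDerivBound N s τ ρ a) (n : ℕ) :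
    HasDerivBound N s τ ((2 ^ N * ρ) ^ n) fun x => a x ^ n := by
  induction n with
  | zero =>
    have h := const (N := N) hs hτ (1 : F →L[ℝ] F)
    refine ⟨by simpa using h.contDiffOn, fun i hi x hx => ?_⟩
    simp only [pow_zero]
    refine (h.norm_le i hi x hx).trans ?_
    gcongr
    exact ContinuousLinearMap.norm_id_le
  | succ n ih =>
    simpa only [pow_succ', ContinuousLinearMap.mul_apply'] using
      bilin hs hτ hρ (by positivity) ha ih (ContinuousLinearMap.opNorm_mul_le ℝ (F →L[ℝ] F))

include hs in
theorem comp_clm {U : Set G} (hU : IsOpen U) {ε : ℝ} {g : G → F} {P : E →L[ℝ] G} (hP : ‖P‖ ≤ τ)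
    (hsU : Set.MapsTo P s U) (hg : HasDerivBound N U 1 ε g) :
    HasDerivBound N s τ ε (g ∘ P) := by
  refine ⟨hg.contDiffOn.comp P.contDiff.contDiffOn hsU, fun i hi x hx => ?_⟩
  have hcomp : iteratedFDerivWithin ℝ i (g ∘ P) s x =
      (iteratedFDerivWithin ℝ i g U (P x)).compContinuousLinearMap fun _ => P := by
    rw [iteratedFDerivWithin_of_isOpen i hs hx, ← iteratedFDerivWithin_of_isOpen i
      (hU.preimage P.continuous) (hsU hx)]
    exact P.iteratedFDerivWithin_comp_right hg.contDiffOn hU.uniqueDiffOn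
      (hU.preimage P.continuous).uniqueDiffOn (hsU hx) (by exact_mod_cast hi)
  have := hg.norm_le i hi (P x) (hsU hx)
  rw [one_pow, mul_one] at this
  calc ‖iteratedFDerivWithin ℝ i (g ∘ P) s x‖
      ≤ ‖iteratedFDerivWithin ℝ i g U (P x)‖ * ∏ _ : Fin i, ‖P‖ :=
        hcomp ▸ ContinuousMultilinearMap.norm_compContinuousLinearMap_le _ _
    _ ≤ ε * τ ^ i := by
        rw [Fin.prod_const]
        gcongr
        exact (norm_nonneg _).trans this

include hs in
theorem norm_iteratedFDeriv_le (hτ : 1 ≤ τ) {ε : ℝ} (hε : 0 ≤ ε) {f : E → F}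
    (hf : HasDerivBound N s τ ε f) {i : ℕ} (hi : i ≤ N) {x : E} (hx : x ∈ s) :
    ‖iteratedFDeriv ℝ i f x‖ ≤ ε * τ ^ N := by
  rw [← iteratedFDerivWithin_of_isOpen i hs hx]
  refine (hf.norm_le i hi x hx).trans ?_
  gcongr

end HasDerivBound
end DerivBounds

section Restriction

variable {ι κ F : Type*} {e : κ → ι}

/-- Restriction of coordinates along `e : κ → ι`; for the inclusion of the first `p + 1` indices it
is the projection `x ↦ x_p` onto `ℝ^(p+1)`. -/
def coordRestrict (e : κ → ι) : (ι → ℝ) →L[ℝ] (κ → ℝ) :=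
  .pi fun j => .proj (e j)

@[simp]
theorem coordRestrict_apply (e : κ → ι) (x : ι → ℝ) (j : κ) : coordRestrict e x j = x (e j) :=
  rfl

theorem norm_coordRestrict_le [Fintype ι] [Fintype κ] (e : κ → ι) : ‖coordRestrict e‖ ≤ 1 :=
  ContinuousLinearMap.opNorm_le_bound _ zero_le_one fun x => by
    rw [one_mul]
    exact (pi_norm_le_iff_of_nonneg (norm_nonneg x)).2 fun j => norm_le_pi_norm x (e j)

variable [DecidableEq ι]

theorem coordRestrict_single_of_notMem_range {i : ι} (hi : i ∉ Set.range e) :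
    coordRestrict e (Pi.single i 1) = 0 := by
  ext k
  have : e k ≠ i := fun h => hi ⟨k, h⟩
  simp [this]

theorem coordRestrict_single [DecidableEq κ] (he : Function.Injective e) (j : κ) :
    coordRestrict e (Pi.single (e j) 1) = Pi.single j 1 := by
  ext k
  simp [Pi.single_apply, he.eq_iff]

variable [Fintype ι] [Fintype κ] [NormedAddCommGroup F] [NormedSpace ℝ F]

theorem pderiv_comp_coordRestrict_of_notMem_range {i : ι} (hi : i ∉ Set.range e)
    {g : (κ → ℝ) → F} {x : ι → ℝ} (hg : DifferentiableAt ℝ g (coordRestrict e x)) :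
    pderiv i (g ∘ coordRestrict e) x = 0 := by
  rw [pderiv, fderiv_comp x hg (coordRestrict e).differentiableAt, ContinuousLinearMap.fderiv,
    ContinuousLinearMap.comp_apply, coordRestrict_single_of_notMem_range hi, map_zero]

variable [DecidableEq κ]

theorem pderiv_comp_coordRestrict (he : Function.Injective e) {g : (κ → ℝ) → F} {x : ι → ℝ}
    (hg : DifferentiableAt ℝ g (coordRestrict e x)) (j : κ) :
    pderiv (e j) (g ∘ coordRestrict e) x = pderiv j g (coordRestrict e x) := by
  rw [pderiv, fderiv_comp x hg (coordRestrict e).differentiableAt, ContinuousLinearMap.fderiv,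
    ContinuousLinearMap.comp_apply, coordRestrict_single he, pderiv]

theorem laplacian_comp_coordRestrict (he : Function.Injective e) {g : (κ → ℝ) → F} {x : ι → ℝ}
    (hg : ContDiffAt ℝ 2 g (coordRestrict e x)) :
    laplacian (g ∘ coordRestrict e) x = laplacian g (coordRestrict e x) := by
  have hnear : ∀ᶠ y in 𝓝 x, DifferentiableAt ℝ g (coordRestrict e y) :=
    (coordRestrict e).continuous.continuousAt.eventually
      ((hg.eventually (by simp)).mono fun y hy => hy.differentiableAt two_ne_zero)
  refine (Fintype.sum_of_injective e he _ _ (fun i hi => ?_) fun j => ?_).symm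
  · have hzero : pderiv i (g ∘ coordRestrict e) =ᶠ[𝓝 x] fun _ => 0 :=
      hnear.mono fun y hy => pderiv_comp_coordRestrict_of_notMem_range hi hy
    simp [pderiv, hzero.fderiv_eq]
  · have hpderiv : pderiv (e j) (g ∘ coordRestrict e) =ᶠ[𝓝 x] pderiv j g ∘ coordRestrict e :=
      hnear.mono fun y hy => pderiv_comp_coordRestrict he hy j
    rw [← pderiv_comp_coordRestrict he (differentiableAt_pderiv hg j), pderiv, pderiv,
      hpderiv.fderiv_eq]

end Restriction

section LaplacianBounds

variable {F κ : Type*} [NormedAddCommGroup F] [NormedSpace ℝ F] [Fintype κ] [DecidableEq κ]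
  {g : (κ → ℝ) → F} {y : κ → ℝ} {i : ℕ}

theorem norm_iteratedFDeriv_pderiv_le (hg : ContDiffAt ℝ (i + 1) g y) (j : κ) :
    ‖iteratedFDeriv ℝ i (pderiv j g) y‖ ≤ ‖iteratedFDeriv ℝ (i + 1) g y‖ := by
  rw [← norm_iteratedFDeriv_fderiv]
  refine (norm_iteratedFDeriv_clm_apply_const (hg.fderiv_right le_rfl) le_rfl).trans ?_
  rw [Pi.norm_single, norm_one, one_mul]

theorem norm_iteratedFDeriv_laplacian_le (hg : ContDiffAt ℝ (i + 2) g y) :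
    ‖iteratedFDeriv ℝ i (laplacian g) y‖ ≤ Fintype.card κ * ‖iteratedFDeriv ℝ (i + 2) g y‖ := by
  have hpderiv (j : κ) : ContDiffAt ℝ (i + 1) (pderiv j g) y :=
    contDiffAt_pderiv (by rwa [add_assoc, one_add_one_eq_two]) j
  have hterm (j : κ) : ‖iteratedFDeriv ℝ i (pderiv j (pderiv j g)) y‖ ≤
      ‖iteratedFDeriv ℝ (i + 2) g y‖ :=
    (norm_iteratedFDeriv_pderiv_le (hpderiv j) j).trans
      (norm_iteratedFDeriv_pderiv_le (by rwa [Nat.cast_add_one, add_assoc, one_add_one_eq_two]) j)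
  have hsum : iteratedFDeriv ℝ i (laplacian g) y =
      ∑ j, iteratedFDeriv ℝ i (pderiv j (pderiv j g)) y :=
    iteratedFDeriv_fun_sum_apply fun j _ => contDiffAt_pderiv (hpderiv j) j
  rw [hsum]
  simpa using norm_sum_le_of_le Finset.univ fun j _ => hterm j

end LaplacianBounds

section CliffordSeries

variable {ι κ F : Type*} [NormedAddCommGroup F] [NormedSpace ℝ F] {e : κ → ι} {σ : Finset ι}
  {a : (ι → ℝ) →L[ℝ] F →L[ℝ] F}

/-- The series `∑ a(x)ⁿ bₙ(y)`, `y` the coordinates of `x` along `e`: the paper's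
`∑ x_qⁿ bₙ(x_p)`. -/
noncomputable def cliffordSeries (a : (ι → ℝ) →L[ℝ] F →L[ℝ] F) (e : κ → ι)
    (b : ℕ → (κ → ℝ) → F) (x : ι → ℝ) : F :=
  ∑' n, (a x ^ n) (b n (coordRestrict e x))

/-- The neighbourhood `{x : x_p ∈ U, ‖x_q‖ < ρ}` of `U ⊆ ℝ^(p+1)`, with `‖x_q‖` measured as an
operator norm. -/
def operatorTube (a : (ι → ℝ) →L[ℝ] F →L[ℝ] F) (e : κ → ι) (U : Set (κ → ℝ)) (ρ : ℝ) :
    Set (ι → ℝ) :=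
  coordRestrict e ⁻¹' U ∩ a ⁻¹' Metric.ball 0 ρ

theorem isOpen_operatorTube {U : Set (κ → ℝ)} (hU : IsOpen U) (ρ : ℝ) :
    IsOpen (operatorTube a e U ρ) :=
  (hU.preimage (coordRestrict e).continuous).inter (Metric.isOpen_ball.preimage a.continuous)

theorem convex_operatorTube {U : Set (κ → ℝ)} (hU : Convex ℝ U) (ρ : ℝ) :
    Convex ℝ (operatorTube a e U ρ) :=
  (hU.linear_preimage (coordRestrict e).toLinearMap).inter
    ((convex_ball 0 ρ).linear_preimage a.toLinearMap)

variable {U : Set (κ → ℝ)} {b : ℕ → (κ → ℝ) → F} {ρ C M : ℝ}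

theorem norm_pow_apply_le (T : F →L[ℝ] F) (n : ℕ) (c : F) : ‖(T ^ n) c‖ ≤ ‖T‖ ^ n * ‖c‖ := by
  induction n with
  | zero => simp
  | succ n ih =>
    calc ‖(T ^ (n + 1)) c‖ = ‖T ((T ^ n) c)‖ := by rw [pow_succ', mul_apply_eq_comp]
      _ ≤ ‖T‖ * (‖T‖ ^ n * ‖c‖) := T.le_opNorm_of_le ih
      _ = ‖T‖ ^ (n + 1) * ‖c‖ := by ring

theorem norm_pow_apply_le_of_mem_operatorTube (hρ : 0 ≤ ρ) {x : ι → ℝ}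
    (hx : x ∈ operatorTube a e U ρ) {n : ℕ} {c : F} (hc : ‖c‖ ≤ C * M ^ n) :
    ‖(a x ^ n) c‖ ≤ C * (ρ * M) ^ n := by
  have hax : ‖a x‖ ≤ ρ := (mem_ball_zero_iff.1 hx.2).le
  have : 0 ≤ C * M ^ n := (norm_nonneg c).trans hc
  calc ‖(a x ^ n) c‖ ≤ ‖a x‖ ^ n * ‖c‖ := norm_pow_apply_le _ _ _
    _ ≤ ρ ^ n * (C * M ^ n) := by gcongr
    _ = C * (ρ * M) ^ n := by rw [mul_pow]; ring

variable [Fintype κ]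

theorem hasDerivBound_pow_apply [Fintype ι] {N : ℕ} {U : Set (κ → ℝ)} (hU : IsOpen U) {ρ ε : ℝ}
    (hρ : 0 < ρ) (hε : 0 ≤ ε) {b : (κ → ℝ) → F} (hb : HasDerivBound N U 1 ε b)
    (n : ℕ) :
    HasDerivBound N (operatorTube a e U ρ) (max 1 (‖a‖ / ρ)) (2 ^ N * (2 ^ N * ρ) ^ n * ε)
      fun x => (a x ^ n) (b (coordRestrict e x)) := by
  have hs : IsOpen (operatorTube a e U ρ) := isOpen_operatorTube hU ρ
  have hτ : 0 ≤ max 1 (‖a‖ / ρ) := by positivity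
  have ha : HasDerivBound N (operatorTube a e U ρ) (max 1 (‖a‖ / ρ)) ρ a :=
    .clm hs hτ hρ.le a (fun x hx => (mem_ball_zero_iff.1 hx.2).le)
      ((div_le_iff₀' hρ).1 (le_max_right _ _))
  exact .bilin hs hτ (by positivity) hε (ha.pow hs hτ hρ.le n)
    (hb.comp_clm hs hU ((norm_coordRestrict_le e).trans (le_max_left _ _)) fun x hx => hx.1)
    (B := .id ℝ (F →L[ℝ] F)) ContinuousLinearMap.norm_id_le

/-- The coefficients `bₙ` are `C²` on the convex open set `U`, and their derivatives of order at
most two are `O(Mⁿ)` there. -/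
structure HasGeometricBound (U : Set (κ → ℝ)) (C M : ℝ) (b : ℕ → (κ → ℝ) → F) : Prop where
  isOpen : IsOpen U
  convex : Convex ℝ U
  const_nonneg : 0 ≤ C
  ratio_nonneg : 0 ≤ M
  hasDerivBound : ∀ n, HasDerivBound 2 U 1 (C * M ^ n) (b n)

theorem HasGeometricBound.of_factorial_mul_norm_iteratedFDeriv_le (hU : IsOpen U)
    (hUconv : Convex ℝ U) {K : ℝ} (hC : 0 ≤ C) (hM : 1 ≤ M) (hK : 0 ≤ K)
    (hb : ∀ n, ContDiffOn ℝ 2 (b n) U)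
    (hbound : ∀ n, ∀ y ∈ U, ∀ i ≤ 2, n.factorial * ‖iteratedFDeriv ℝ i (b n) y‖ ≤
      C * ((i + n).factorial * M ^ (i + n) * K ^ n)) :
    HasGeometricBound U (C * (2 * (2 * M) ^ 2)) (2 * M * K) b := by
  have hfactorial (i n : ℕ) :
      ((i + n).factorial : ℝ) ≤ 2 ^ (i + n) * i.factorial * n.factorial := by
    rw [← Nat.add_choose_mul_factorial_mul_factorial]
    push_cast
    gcongr
    exact_mod_cast Nat.choose_le_two_pow (i + n) n
  refine ⟨hU, hUconv, by positivity, by positivity, fun n => ⟨hb n, fun i hi y hy => ?_⟩⟩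
  rw [iteratedFDerivWithin_of_isOpen i hU hy, one_pow, mul_one]
  refine le_of_mul_le_mul_left ((hbound n y hy i hi).trans ?_)
    (Nat.cast_pos.2 n.factorial_pos : (0 : ℝ) < n.factorial)
  have hi2 : (i.factorial : ℝ) ≤ 2 := by exact_mod_cast Nat.factorial_le hi
  calc _ ≤ C * (2 ^ (i + n) * i.factorial * n.factorial * M ^ (i + n) * K ^ n) := by
        gcongr
        exact hfactorial i n
    _ = n.factorial * (C * (i.factorial * (2 * M) ^ i) * (2 * M * K) ^ n) := by
        simp only [pow_add, mul_pow]
        ring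
    _ ≤ n.factorial * (C * (2 * (2 * M) ^ 2) * (2 * M * K) ^ n) := by
        gcongr
        linarith

namespace HasGeometricBound

variable (hb : HasGeometricBound U C M b)
include hb

theorem contDiffAt {y : κ → ℝ} (hy : y ∈ U) (n : ℕ) : ContDiffAt ℝ 2 (b n) y :=
  (hb.hasDerivBound n).contDiffOn.contDiffAt (hb.isOpen.mem_nhds hy)

theorem norm_le {y : κ → ℝ} (hy : y ∈ U) (n : ℕ) : ‖b n y‖ ≤ C * M ^ n := by
  simpa using (hb.hasDerivBound n).norm_le 0 zero_le_two y hy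

theorem summable_term [CompleteSpace F] (hρ : 0 < ρ) (hρM : 4 * ρ * M < 1) {x : ι → ℝ}
    (hx : x ∈ operatorTube a e U ρ) :
    Summable fun n => (a x ^ n) (b n (coordRestrict e x)) :=
  have := mul_nonneg hρ.le hb.ratio_nonneg
  .of_norm_bounded ((summable_geometric_of_lt_one this (by linarith)).mul_left C)
    fun n => norm_pow_apply_le_of_mem_operatorTube hρ.le hx (hb.norm_le hx.1 n)

theorem norm_laplacian_le [DecidableEq κ] {y : κ → ℝ} (hy : y ∈ U) (n : ℕ) :
    ‖laplacian (b n) y‖ ≤ Fintype.card κ * C * M ^ n := by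
  have h := norm_iteratedFDeriv_laplacian_le (i := 0) (by simpa using hb.contDiffAt hy n)
  rw [norm_iteratedFDeriv_zero, ← iteratedFDerivWithin_of_isOpen _ hb.isOpen hy] at h
  rw [mul_assoc]
  refine h.trans ?_
  gcongr
  simpa using (hb.hasDerivBound n).norm_le 2 le_rfl y hy

variable [Fintype ι] (hρ : 0 < ρ)
include hρ

theorem hasDerivBound_term (n : ℕ) :
    HasDerivBound 2 (operatorTube a e U ρ) (max 1 (‖a‖ / ρ)) (2 ^ 2 * (2 ^ 2 * ρ) ^ n * (C * M ^ n))
      fun x => (a x ^ n) (b n (coordRestrict e x)) :=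
  hasDerivBound_pow_apply hb.isOpen hρ (mul_nonneg hb.const_nonneg (pow_nonneg hb.ratio_nonneg n))
    (hb.hasDerivBound n) n

theorem exists_summable_norm_iteratedFDeriv_le (a : (ι → ℝ) →L[ℝ] F →L[ℝ] F) (e : κ → ι)
    (hρM : 4 * ρ * M < 1) :
    ∃ c : ℕ → ℝ, Summable c ∧ ∀ n, ∀ i ≤ 2, ∀ x ∈ operatorTube a e U ρ,
      ‖iteratedFDeriv ℝ i (fun x => (a x ^ n) (b n (coordRestrict e x))) x‖ ≤ c n := by
  have hC := hb.const_nonneg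
  have hM := hb.ratio_nonneg
  refine ⟨fun n => 2 ^ 2 * (2 ^ 2 * ρ) ^ n * (C * M ^ n) * (max 1 (‖a‖ / ρ)) ^ 2, ?_,
    fun n i hi x hx => (hb.hasDerivBound_term hρ n).norm_iteratedFDeriv_le
      (isOpen_operatorTube hb.isOpen ρ) (le_max_left _ _) (by positivity) hi hx⟩
  refine (((summable_geometric_of_lt_one (r := 4 * ρ * M) (by positivity) hρM).mul_left
    (4 * C)).mul_right ((max 1 (‖a‖ / ρ)) ^ 2)).congr fun n => ?_
  rw [mul_pow]
  ring

variable [CompleteSpace F]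

theorem contDiffOn_cliffordSeries (hρM : 4 * ρ * M < 1) :
    ContDiffOn ℝ 2 (cliffordSeries a e b) (operatorTube a e U ρ) := by
  obtain ⟨c, hc, hbound⟩ := hb.exists_summable_norm_iteratedFDeriv_le hρ a e hρM
  exact (contDiffOn_two_tsum (isOpen_operatorTube hb.isOpen ρ)
    (convex_operatorTube hb.convex ρ).isPreconnected hc
    (fun n => (hb.hasDerivBound_term hρ n).contDiffOn) hbound).1

end HasGeometricBound

namespace IsCliffordMap

variable [Fintype ι] [DecidableEq ι] [DecidableEq κ]

theorem laplacian_pow_apply_comp (ha : IsCliffordMap σ a) (he : Function.Injective e)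
    (hσ : ∀ j, e j ∉ σ) {b : (κ → ℝ) → F} {x : ι → ℝ} (hb : ContDiffAt ℝ 2 b (coordRestrict e x))
    (n : ℕ) :
    laplacian (fun x => (a x ^ n) (b (coordRestrict e x))) x =
      laplacian (fun x => a x ^ n) x (b (coordRestrict e x)) +
        (a x ^ n) (laplacian b (coordRestrict e x)) := by
  have hcross (i : ι) :
      pderiv i (fun x => a x ^ n) x (pderiv i (b ∘ coordRestrict e) x) = 0 := by
    by_cases hi : i ∈ σ
    · have hrange : i ∉ Set.range e := by rintro ⟨j, rfl⟩; exact hσ j hi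
      rw [pderiv_comp_coordRestrict_of_notMem_range hrange (hb.differentiableAt two_ne_zero),
        map_zero]
    · rw [ha.pderiv_pow_eq_zero hi, zero_apply]
  have hprod := laplacian_bilin (.id ℝ (F →L[ℝ] F)) (a.contDiff.pow n).contDiffAt
    (hb.comp x (coordRestrict e).contDiff.contDiffAt)
  simp only [ContinuousLinearMap.id_apply, hcross, Finset.sum_const_zero, smul_zero, add_zero,
    laplacian_comp_coordRestrict he hb] at hprod
  exact hprod

variable [CompleteSpace F]

theorem hasSum_laplacian_cliffordSeries (ha : IsCliffordMap σ a) (he : Function.Injective e)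
    (hσ : ∀ j, e j ∉ σ) (hb : HasGeometricBound U C M b) (hρ : 0 < ρ) (hρM : 4 * ρ * M < 1)
    {x : ι → ℝ} (hx : x ∈ operatorTube a e U ρ) :
    HasSum (fun n => (a x ^ n) (laplacian (b n) (coordRestrict e x) -
      lapCoeff σ.card n • b (n + 2) (coordRestrict e x))) (laplacian (cliffordSeries a e b) x) := by
  obtain ⟨c, hc, hbound⟩ := hb.exists_summable_norm_iteratedFDeriv_le hρ a e hρM
  have htotal := hasSum_laplacian (isOpen_operatorTube hb.isOpen ρ)
    (convex_operatorTube hb.convex ρ).isPreconnected hc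
    (fun n => (hb.hasDerivBound_term hρ n).contDiffOn) hbound hx
  have hterm (n : ℕ) := ha.laplacian_pow_apply_comp he hσ (hb.contDiffAt hx.1 n) n
  have hbase : Summable fun n => (a x ^ n) (laplacian (b n) (coordRestrict e x)) := by
    have := mul_nonneg hρ.le hb.ratio_nonneg
    exact .of_norm_bounded ((summable_geometric_of_lt_one this (by linarith)).mul_left _)
      fun n => norm_pow_apply_le_of_mem_operatorTube hρ.le hx (hb.norm_laplacian_le hx.1 n)
  have hfibre := htotal.sub hbase.hasSum
  simp only [hterm, add_sub_cancel_right] at hfibre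
  rw [← hasSum_nat_add_iff' 2] at hfibre
  simp only [ha.laplacian_pow, Finset.sum_range_succ, Finset.sum_range_zero, pow_zero, pow_one,
    laplacian_const, laplacian_clm, zero_apply, add_zero, sub_zero] at hfibre
  convert hfibre.add hbase.hasSum using 1
  · ext n
    rw [map_sub, map_smul, smul_apply, neg_smul]; abel
  · abel

end IsCliffordMap
end CliffordSeries

section CauchyEstimates

variable {E F : Type*} [NormedAddCommGroup E] [NormedSpace ℝ E] [NormedAddCommGroup F]
  [NormedSpace ℝ F]

open scoped NNReal in
theorem exists_nnnorm_changeOrigin_mul_pow_le (P : FormalMultilinearSeries ℝ E F) {ρ : ℝ≥0}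
    (hρ : (ρ + ρ : ℝ≥0) < P.radius) :
    ∃ C : ℝ≥0, ∀ z, ‖z‖₊ ≤ ρ → ∀ n, ‖P.changeOrigin z n‖₊ * ρ ^ n ≤ C := by
  have hsum := P.changeOriginSeries_summable_aux₁ (r := ρ) (r' := ρ) (by exact_mod_cast hρ)
  have hρ' : (ρ : ENNReal) < P.radius := lt_of_le_of_lt (by simp) hρ
  have hfibres := NNReal.summable_sigma.1 hsum
  refine ⟨∑' k, ∑' s : Σ l : ℕ, { s : Finset (Fin (k + l)) // s.card = l },
    ‖P (k + s.1)‖₊ * ρ ^ s.1 * ρ ^ k, fun z hz n => ?_⟩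
  have hfibre := P.changeOriginSeries_summable_aux₂ hρ' n
  have hterm (s : Σ l : ℕ, { s : Finset (Fin (n + l)) // s.card = l }) :
      ‖P (n + s.1)‖₊ * ‖z‖₊ ^ s.1 ≤ ‖P (n + s.1)‖₊ * ρ ^ s.1 := by gcongr
  calc ‖P.changeOrigin z n‖₊ * ρ ^ n
      ≤ (∑' s : Σ l : ℕ, { s : Finset (Fin (n + l)) // s.card = l },
          ‖P (n + s.1)‖₊ * ρ ^ s.1) * ρ ^ n := by
        gcongr
        exact (P.nnnorm_changeOrigin_le n (lt_of_le_of_lt (by exact_mod_cast hz) hρ')).trans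
          (Summable.tsum_le_tsum hterm (NNReal.summable_of_le hterm hfibre) hfibre)
    _ = ∑' s : Σ l : ℕ, { s : Finset (Fin (n + l)) // s.card = l },
          ‖P (n + s.1)‖₊ * ρ ^ s.1 * ρ ^ n := (NNReal.tsum_mul_right _ _).symm
    _ ≤ ∑' k, ∑' s : Σ l : ℕ, { s : Finset (Fin (k + l)) // s.card = l },
          ‖P (k + s.1)‖₊ * ρ ^ s.1 * ρ ^ k :=
        Summable.le_tsum hfibres.2 n fun _ _ => zero_le

variable [CompleteSpace F]

theorem norm_iteratedFDeriv_le_factorial_mul {f : E → F} {P : FormalMultilinearSeries ℝ E F} {x : E}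
    {r : ENNReal} (h : HasFPowerSeriesOnBall f P x r) (n : ℕ) :
    ‖iteratedFDeriv ℝ n f x‖ ≤ n.factorial * ‖P n‖ := by
  refine ContinuousMultilinearMap.opNorm_le_bound (by positivity) fun w => ?_
  have hperm (π : Equiv.Perm (Fin n)) : ‖P n fun i => w (π i)‖ ≤ ‖P n‖ * ∏ i, ‖w i‖ := by
    simpa only [Equiv.prod_comp π fun i => ‖w i‖] using (P n).le_opNorm fun i => w (π i)
  rw [h.iteratedFDeriv_eq_sum_of_completeSpace]
  refine (norm_sum_le_of_le _ fun π _ => hperm π).trans_eq ?_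
  simp [Finset.card_univ, Fintype.card_perm, mul_assoc]

theorem exists_norm_iteratedFDeriv_le_factorial_mul_pow {f : E → F} {x : E}
    (hf : AnalyticAt ℝ f x) :
    ∃ δ > 0, ∃ C M : ℝ, 0 ≤ C ∧ 1 ≤ M ∧ ∀ y ∈ Metric.ball x δ, ∀ n : ℕ,
      ‖iteratedFDeriv ℝ n f y‖ ≤ C * (n.factorial * M ^ n) := by
  obtain ⟨P, r, hP⟩ := hf
  obtain ⟨R, hR, hRr⟩ := ENNReal.lt_iff_exists_nnreal_btwn.1 hP.r_pos
  have hRpos : 0 < R := by exact_mod_cast hR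
  obtain ⟨C, hC⟩ := exists_nnnorm_changeOrigin_mul_pow_le P (ρ := R / 2)
    (by simpa using hRr.trans_le hP.r_le)
  refine ⟨R / 2, by positivity, C, max 1 (R / 2 : ℝ)⁻¹, C.2, le_max_left _ _, fun y hy n => ?_⟩
  have hyx : ‖y - x‖₊ ≤ R / 2 := by
    exact_mod_cast (mem_ball_iff_norm.1 hy).le
  have hyr : (‖y - x‖₊ : ENNReal) < r :=
    lt_of_le_of_lt (by exact_mod_cast hyx.trans (half_le_self R.2)) hRr
  have hPy : HasFPowerSeriesOnBall f (P.changeOrigin (y - x)) y (r - ‖y - x‖₊) := by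
    simpa using hP.changeOrigin hyr
  have hcoeff : ‖P.changeOrigin (y - x) n‖ * (R / 2 : ℝ) ^ n ≤ C := by
    exact_mod_cast hC (y - x) hyx n
  calc ‖iteratedFDeriv ℝ n f y‖ ≤ n.factorial * ‖P.changeOrigin (y - x) n‖ :=
        norm_iteratedFDeriv_le_factorial_mul hPy n
    _ ≤ n.factorial * (C * (R / 2 : ℝ)⁻¹ ^ n) := by
        rw [inv_pow, ← div_eq_mul_inv]
        gcongr
        exact (le_div_iff₀ (by positivity)).2 hcoeff
    _ ≤ C * (n.factorial * max 1 (R / 2 : ℝ)⁻¹ ^ n) := by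
        rw [mul_left_comm]
        gcongr
        exact le_max_right _ _

end CauchyEstimates

section CKCoefficients

theorem lapCoeff_two_mul (q k : ℕ) : lapCoeff q (2 * k) = 4 * (k + 1) * (k + q / 2) := by
  induction k with
  | zero => rw [mul_zero, lapCoeff]; push_cast; ring
  | succ k ih => rw [mul_add_one, lapCoeff, ih]; push_cast; ring

theorem lapCoeff_two_mul_add_one (q k : ℕ) :
    lapCoeff q (2 * k + 1) = 4 * (k + 1) * (k + (q / 2 + 1)) := by
  induction k with
  | zero => rw [mul_zero, zero_add, lapCoeff]; push_cast; ring
  | succ k ih => rw [mul_add_one, add_right_comm, lapCoeff, ih]; push_cast; ring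

theorem le_lapCoeff {q : ℕ} (hq : 0 < q) (n : ℕ) : ((n + 2) * (n + 1) : ℝ) ≤ lapCoeff q n := by
  have : (1 : ℝ) ≤ q := by exact_mod_cast hq
  induction n using Nat.twoStepInduction with
  | zero => rw [lapCoeff]; norm_num; linarith
  | one => rw [lapCoeff]; norm_num; linarith
  | more n ih _ => rw [lapCoeff]; push_cast; linarith

theorem lapCoeff_pos {q : ℕ} (hq : 0 < q) (n : ℕ) : 0 < lapCoeff q n :=
  lt_of_lt_of_le (by positivity) (le_lapCoeff hq n)

variable {κ F : Type*} [Fintype κ] [DecidableEq κ] [NormedAddCommGroup F] [NormedSpace ℝ F]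
  {q : ℕ} {A₀ A₁ : (κ → ℝ) → F} {U : Set (κ → ℝ)}

/-- The coefficients of the harmonic CK-extension, through the recursion expressing that
`∑ x_qⁿ Aₙ(x_p)` is harmonic. -/
noncomputable def ckCoeff (q : ℕ) (A₀ A₁ : (κ → ℝ) → F) : ℕ → (κ → ℝ) → F
  | 0 => A₀
  | 1 => A₁
  | n + 2 => (lapCoeff q n)⁻¹ • laplacian (ckCoeff q A₀ A₁ n)

theorem laplacian_ckCoeff (hq : 0 < q) (A₀ A₁ : (κ → ℝ) → F) (n : ℕ) :
    laplacian (ckCoeff q A₀ A₁ n) = lapCoeff q n • ckCoeff q A₀ A₁ (n + 2) := by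
  rw [ckCoeff, smul_inv_smul₀ (lapCoeff_pos hq n).ne']

theorem eqOn_ckCoeff (hU : IsOpen U) (hq : 0 < q) {b : ℕ → (κ → ℝ) → F}
    (hb : ∀ n, ∀ y ∈ U, laplacian (b n) y = lapCoeff q n • b (n + 2) y) (n : ℕ) :
    Set.EqOn (b n) (ckCoeff q (b 0) (b 1) n) U := by
  induction n using Nat.twoStepInduction with
  | zero => exact Set.eqOn_refl _ _
  | one => exact Set.eqOn_refl _ _
  | more n ih _ =>
    intro y hy
    rw [ckCoeff, Pi.smul_apply, ← laplacian_congr (ih.eventuallyEq_of_mem (hU.mem_nhds hy)),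
      hb n y hy,
      inv_smul_smul₀ (lapCoeff_pos hq n).ne']

theorem laplacian_const_smul (c : ℝ) (f : (κ → ℝ) → F) : laplacian (c • f) = c • laplacian f := by
  have hpderiv (i : κ) (g : (κ → ℝ) → F) : pderiv i (c • g) = c • pderiv i g := by
    ext x
    simp [pderiv, fderiv_const_smul_field]
  ext x
  simp [laplacian, hpderiv, Finset.smul_sum]

/-- `Γ(α) / (2^(2k) k! Γ(k + α))`. -/
noncomputable def gammaCoeff (α : ℝ) (k : ℕ) : ℝ :=
  Real.Gamma α / (2 ^ (2 * k) * k.factorial * Real.Gamma (k + α))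

theorem gammaCoeff_zero {α : ℝ} (hα : 0 < α) : gammaCoeff α 0 = 1 := by
  simp [gammaCoeff, (Real.Gamma_pos_of_pos hα).ne']

theorem gammaCoeff_succ {α : ℝ} (hα : 0 < α) (k : ℕ) :
    gammaCoeff α (k + 1) = (4 * (k + 1) * (k + α))⁻¹ * gammaCoeff α k := by
  have hkα : (0 : ℝ) < k + α := by positivity
  have hΓ := (Real.Gamma_pos_of_pos hkα).ne'
  have hΓsucc : Real.Gamma ((k + 1 : ℕ) + α) = (k + α) * Real.Gamma (k + α) := by
    rw [← Real.Gamma_add_one hkα.ne']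
    push_cast
    ring_nf
  rw [gammaCoeff, gammaCoeff, hΓsucc, Nat.factorial_succ, mul_add_one 2, pow_add]
  push_cast
  field_simp
  norm_num

theorem ckCoeff_two_mul (hq : 0 < q) (A₀ A₁ : (κ → ℝ) → F) (k : ℕ) :
    ckCoeff q A₀ A₁ (2 * k) = gammaCoeff (q / 2) k • laplacian^[k] A₀ := by
  have hα : (0 : ℝ) < q / 2 := by positivity
  induction k with
  | zero => simp [ckCoeff, gammaCoeff_zero hα]
  | succ k ih =>
    rw [mul_add_one, ckCoeff, ih, laplacian_const_smul, smul_smul, lapCoeff_two_mul,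
      gammaCoeff_succ hα, Function.iterate_succ_apply']

theorem ckCoeff_two_mul_add_one (hq : 0 < q) (A₀ A₁ : (κ → ℝ) → F) (k : ℕ) :
    ckCoeff q A₀ A₁ (2 * k + 1) = gammaCoeff (q / 2 + 1) k • laplacian^[k] A₁ := by
  have hα : (0 : ℝ) < q / 2 + 1 := by positivity
  induction k with
  | zero => simp [ckCoeff, gammaCoeff_zero hα]
  | succ k ih =>
    rw [mul_add_one, add_right_comm, ckCoeff, ih, laplacian_const_smul, smul_smul,
      lapCoeff_two_mul_add_one, gammaCoeff_succ hα, Function.iterate_succ_apply']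

section Bounds

variable [CompleteSpace F]

theorem analyticOnNhd_laplacian {g : (κ → ℝ) → F} (hg : AnalyticOnNhd ℝ g U) :
    AnalyticOnNhd ℝ (laplacian g) U := by
  have hpderiv {h : (κ → ℝ) → F} (hh : AnalyticOnNhd ℝ h U) (i : κ) :
      AnalyticOnNhd ℝ (pderiv i h) U :=
    fun y hy => ((ContinuousLinearMap.apply ℝ F (Pi.single i (1 : ℝ) : κ → ℝ)).analyticAt
      (fderiv ℝ h y)).comp (hh.fderiv y hy)
  exact fun y hy => Finset.univ.analyticAt_fun_sum fun i _ => hpderiv (hpderiv hg i) i y hy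

theorem analyticOnNhd_ckCoeff (hA₀ : AnalyticOnNhd ℝ A₀ U) (hA₁ : AnalyticOnNhd ℝ A₁ U) (n : ℕ) :
    AnalyticOnNhd ℝ (ckCoeff q A₀ A₁ n) U := by
  induction n using Nat.twoStepInduction with
  | zero => exact hA₀
  | one => exact hA₁
  | more n ih _ => exact fun y hy => analyticAt_const.smul (analyticOnNhd_laplacian ih y hy)

theorem factorial_mul_norm_iteratedFDeriv_ckCoeff_le (hq : 0 < q) (hA₀ : AnalyticOnNhd ℝ A₀ U)
    (hA₁ : AnalyticOnNhd ℝ A₁ U) {C M K : ℝ} (hC : 0 ≤ C) (hM : 1 ≤ M) (hK : 1 ≤ K)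
    (hκK : Fintype.card κ ≤ K)
    (h₀ : ∀ y ∈ U, ∀ i, ‖iteratedFDeriv ℝ i A₀ y‖ ≤ C * (i.factorial * M ^ i))
    (h₁ : ∀ y ∈ U, ∀ i, ‖iteratedFDeriv ℝ i A₁ y‖ ≤ C * (i.factorial * M ^ i)) (n : ℕ) :
    ∀ y ∈ U, ∀ i, n.factorial * ‖iteratedFDeriv ℝ i (ckCoeff q A₀ A₁ n) y‖ ≤
      C * ((i + n).factorial * M ^ (i + n) * K ^ n) := by
  induction n using Nat.twoStepInduction with
  | zero => simpa [ckCoeff] using h₀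
  | one =>
    intro y hy i
    rw [Nat.factorial_one, Nat.cast_one, one_mul, pow_one]
    refine (h₁ y hy i).trans (mul_le_mul_of_nonneg_left ?_ hC)
    refine le_trans ?_ (le_mul_of_one_le_right (by positivity) hK)
    gcongr
    · exact i.le_succ
    · exact i.le_succ
  | more n ih _ =>
    intro y hy i
    have hA := analyticOnNhd_ckCoeff (q := q) hA₀ hA₁ n
    have hΔ := norm_iteratedFDeriv_laplacian_le (i := i) (hA y hy).contDiffAt
    have hL := lapCoeff_pos hq n
    have hratio : ((n + 2) * (n + 1) : ℝ) / lapCoeff q n ≤ 1 :=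
      (div_le_one₀ hL).2 (le_lapCoeff hq n)
    have hih := ih y hy (i + 2)
    rw [ckCoeff, iteratedFDeriv_const_smul_apply (analyticOnNhd_laplacian hA y hy).contDiffAt,
      norm_smul, norm_inv, Real.norm_of_nonneg hL.le, Nat.factorial_succ, Nat.factorial_succ]
    calc _ = ((n + 2) * (n + 1) / lapCoeff q n) * (n.factorial *
          ‖iteratedFDeriv ℝ i (laplacian (ckCoeff q A₀ A₁ n)) y‖) := by push_cast; ring
      _ ≤ 1 * (n.factorial * (Fintype.card κ *
          ‖iteratedFDeriv ℝ (i + 2) (ckCoeff q A₀ A₁ n) y‖)) := by gcongr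
      _ = Fintype.card κ * (n.factorial * ‖iteratedFDeriv ℝ (i + 2) (ckCoeff q A₀ A₁ n) y‖) := by
          ring
      _ ≤ K * (C * ((i + 2 + n).factorial * M ^ (i + 2 + n) * K ^ n)) := by gcongr
      _ = C * ((i + (n + 2)).factorial * M ^ (i + (n + 2)) * K ^ (n + 1)) := by
          rw [add_right_comm i 2 n, add_assoc i n 2]
          ring
      _ ≤ _ := by gcongr; exact one_le_two

theorem exists_hasGeometricBound_ckCoeff (hq : 0 < q) {y : κ → ℝ} (hU : U ∈ 𝓝 y)
    (hA₀ : AnalyticOnNhd ℝ A₀ U) (hA₁ : AnalyticOnNhd ℝ A₁ U) :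
    ∃ δ > 0, ∃ C M : ℝ, Metric.ball y δ ⊆ U ∧
      HasGeometricBound (Metric.ball y δ) C M (ckCoeff q A₀ A₁) := by
  have hy := mem_of_mem_nhds hU
  obtain ⟨δ, hδ, hδU⟩ := Metric.mem_nhds_iff.1 hU
  have hA : AnalyticAt ℝ (fun z => (A₀ z, A₁ z)) y := (hA₀ y hy).prod (hA₁ y hy)
  obtain ⟨η, hη, C, M, hC, hM, hAbound⟩ := exists_norm_iteratedFDeriv_le_factorial_mul_pow hA
  have hball : Metric.ball y (min δ η) ⊆ U :=
    (Metric.ball_subset_ball (min_le_left δ η)).trans hδU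
  have hcomp (L : F × F →L[ℝ] F) (hL : ‖L‖ ≤ 1) (z : κ → ℝ) (hz : z ∈ Metric.ball y (min δ η))
      (i : ℕ) : ‖iteratedFDeriv ℝ i (fun z => L (A₀ z, A₁ z)) z‖ ≤ C * (i.factorial * M ^ i) := by
    have hAz : ContDiffAt ℝ i (fun z => (A₀ z, A₁ z)) z :=
      ((hA₀ z (hball hz)).prod (hA₁ z (hball hz))).contDiffAt
    refine (L.norm_iteratedFDeriv_comp_left hAz le_rfl).trans ?_
    exact (mul_le_of_le_one_left (norm_nonneg _) hL).trans
      (hAbound z (Metric.ball_subset_ball (min_le_right δ η) hz) i)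
  refine ⟨min δ η, lt_min hδ hη, _, _, hball,
    .of_factorial_mul_norm_iteratedFDeriv_le Metric.isOpen_ball (convex_ball _ _) hC hM
      (zero_le_one.trans (le_max_left 1 (Fintype.card κ : ℝ)))
      (fun n z hz => (analyticOnNhd_ckCoeff hA₀ hA₁ n z (hball hz)).contDiffAt.contDiffWithinAt)
      fun n z hz i _ => factorial_mul_norm_iteratedFDeriv_ckCoeff_le hq (hA₀.mono hball)
        (hA₁.mono hball) hC hM (le_max_left _ _) (le_max_right _ _)
        (hcomp (.fst ℝ F F) (ContinuousLinearMap.norm_fst_le ..))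
        (hcomp (.snd ℝ F F) (ContinuousLinearMap.norm_snd_le ..)) n z hz i⟩

end Bounds
end CKCoefficients

section Uniqueness

theorem iteratedDeriv_zero_eq_factorial_smul {F : Type*} [NormedAddCommGroup F] [NormedSpace ℝ F]
    [CompleteSpace F] {φ : ℝ → F} {c : ℕ → F}
    (h : ∀ᶠ t in 𝓝 0, HasSum (fun n => t ^ n • c n) (φ t)) (n : ℕ) :
    iteratedDeriv n φ 0 = n.factorial • c n := by
  let P : FormalMultilinearSeries ℝ ℝ F := fun n => .mkPiRing ℝ (Fin n) (c n)
  have hP : HasFPowerSeriesAt φ P 0 :=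
    hasFPowerSeriesAt_iff.2 (by simpa [P, FormalMultilinearSeries.coeff] using h)
  obtain ⟨r, hr⟩ := hP
  rw [iteratedDeriv_eq_iteratedFDeriv]
  simpa [P] using (hr.factorial_smul 1 n).symm

variable {ι κ F : Type*} [NormedAddCommGroup F] [NormedSpace ℝ F] [Fintype ι] [DecidableEq ι]
  {e : κ → ι} {Ω : Set (ι → ℝ)} {f g : (ι → ℝ) → F} {x : ι → ℝ} {i : ι}

theorem pderiv_comm (hf : ContDiffAt ℝ 2 f x) (i j : ι) :
    pderiv i (pderiv j f) x = pderiv j (pderiv i f) x := by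
  have hdiff : DifferentiableAt ℝ (fderiv ℝ f) x :=
    (hf.fderiv_right (m := 1) (by norm_num)).differentiableAt one_ne_zero
  have hexpand (i j : ι) : pderiv i (pderiv j f) x =
      fderiv ℝ (fderiv ℝ f) x (Pi.single i 1) (Pi.single j 1) := by
    rw [pderiv, show pderiv j f = fun y => fderiv ℝ f y (Pi.single j 1) from rfl,
      fderiv_clm_apply hdiff (differentiableAt_const _)]
    simp
  rw [hexpand, hexpand]
  exact hf.isSymmSndFDerivAt (by simp) _ _

theorem contDiffOn_pderiv (hΩ : IsOpen Ω) (hf : ContDiffOn ℝ ∞ f Ω) (i : ι) :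
    ContDiffOn ℝ ∞ (pderiv i f) Ω :=
  fun _ hx => (contDiffAt_pderiv (hf.contDiffAt (hΩ.mem_nhds hx)) i).contDiffWithinAt

theorem contDiffOn_iterate_pderiv (hΩ : IsOpen Ω) (hf : ContDiffOn ℝ ∞ f Ω) (i : ι) (n : ℕ) :
    ContDiffOn ℝ ∞ ((pderiv i)^[n] f) Ω := by
  induction n with
  | zero => exact hf
  | succ n ih =>
    rw [Function.iterate_succ_apply']
    exact contDiffOn_pderiv hΩ ih i

theorem iteratedDeriv_comp_line (hΩ : IsOpen Ω) (i : ι) (n : ℕ) {f : (ι → ℝ) → F}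
    (hf : ContDiffOn ℝ ∞ f Ω) {t : ℝ} (ht : x + t • Pi.single i 1 ∈ Ω) :
    iteratedDeriv n (fun t => f (x + t • Pi.single i 1)) t =
      (pderiv i)^[n] f (x + t • Pi.single i 1) := by
  induction n generalizing f with
  | zero => simp
  | succ n ih =>
    have hline (t : ℝ) : HasDerivAt (fun t : ℝ => x + t • (Pi.single i 1 : ι → ℝ))
        (Pi.single i 1) t := by
      simpa using ((hasDerivAt_id t).smul_const (Pi.single i 1 : ι → ℝ)).const_add x
    have hderiv : deriv (fun t => f (x + t • Pi.single i 1)) =ᶠ[𝓝 t]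
        fun t => pderiv i f (x + t • Pi.single i 1) := by
      filter_upwards [(hline t).continuousAt (hΩ.mem_nhds ht)] with s hs
      have hdiff := (hf.contDiffAt (hΩ.mem_nhds hs)).differentiableAt (by simp)
      exact (hdiff.hasFDerivAt.comp_hasDerivAt s (hline s)).deriv
    rw [iteratedDeriv_succ', hderiv.iteratedDeriv_eq, ih (contDiffOn_pderiv hΩ hf i),
      Function.iterate_succ_apply]

section Leaf

theorem pderiv_eq_of_eventuallyEq_leaf (hi : i ∉ Set.range e) (hf : DifferentiableAt ℝ f x)
    (hg : DifferentiableAt ℝ g x)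
    (h : ∀ᶠ z in 𝓝 x, coordRestrict e z = coordRestrict e x → f z = g z) :
    pderiv i f x = pderiv i g x := by
  have hline : ContinuousAt (fun t : ℝ => x + t • (Pi.single i 1 : ι → ℝ)) 0 := by fun_prop
  rw [ContinuousAt, zero_smul, add_zero] at hline
  have heq : (fun t : ℝ => f (x + t • Pi.single i 1)) =ᶠ[𝓝 0] fun t => g (x + t • Pi.single i 1) :=
    (hline.eventually h).mono fun t ht => ht (by
      rw [map_add, map_smul, coordRestrict_single_of_notMem_range hi, smul_zero, add_zero])
  rw [pderiv, pderiv, ← hf.lineDeriv_eq_fderiv, ← hg.lineDeriv_eq_fderiv]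
  exact heq.deriv_eq

theorem pderiv_pderiv_eq_of_eventuallyEq_leaf (hi : i ∉ Set.range e) (hf : ContDiffAt ℝ 2 f x)
    (hg : ContDiffAt ℝ 2 g x)
    (h : ∀ᶠ z in 𝓝 x, coordRestrict e z = coordRestrict e x → f z = g z) :
    pderiv i (pderiv i f) x = pderiv i (pderiv i g) x := by
  refine pderiv_eq_of_eventuallyEq_leaf hi (differentiableAt_pderiv hf i)
    (differentiableAt_pderiv hg i) ?_
  filter_upwards [h.eventually_nhds, hf.eventually (by simp), hg.eventually (by simp)]
    with z hz hfz hgz hzx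
  exact pderiv_eq_of_eventuallyEq_leaf hi (hfz.differentiableAt two_ne_zero)
    (hgz.differentiableAt two_ne_zero) (by rwa [hzx])

theorem pderiv_eq_zero_of_forall_add_smul (h : ∀ x, ∀ t : ℝ, f (x + t • Pi.single i 1) = f x) :
    pderiv i f = 0 := by
  ext x
  by_cases hf : DifferentiableAt ℝ f x
  · rw [pderiv, ← hf.lineDeriv_eq_fderiv, lineDeriv]
    simp [h]
  · simp [pderiv, fderiv_zero_of_not_differentiableAt hf]

theorem iterate_pderiv_eq_of_hasSum_pow [CompleteSpace F]
    {a : (ι → ℝ) →L[ℝ] F →L[ℝ] F} (hΩ : IsOpen Ω) (hf : ContDiffOn ℝ ∞ f Ω) (hx : x ∈ Ω)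
    (hax : a x = 0) (hi : i ∉ Set.range e) {c : ℕ → F}
    (hsum : ∀ᶠ z in 𝓝 x, coordRestrict e z = coordRestrict e x →
      HasSum (fun n => (a z ^ n) (c n)) (f z)) (n : ℕ) :
    (pderiv i)^[n] f x = n.factorial • (a (Pi.single i 1) ^ n) (c n) := by
  have hline : ContinuousAt (fun t : ℝ => x + t • (Pi.single i 1 : ι → ℝ)) 0 := by fun_prop
  rw [ContinuousAt, zero_smul, add_zero] at hline
  have hpow : ∀ᶠ t : ℝ in 𝓝 0, HasSum (fun n => t ^ n • (a (Pi.single i 1) ^ n) (c n))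
      (f (x + t • Pi.single i 1)) :=
    (hline.eventually hsum).mono fun t ht => by
      simpa [map_add, map_smul, hax, smul_pow] using
        ht (by rw [map_add, map_smul, coordRestrict_single_of_notMem_range hi, smul_zero, add_zero])
  have hzero : x + (0 : ℝ) • Pi.single i 1 = x := by simp
  rw [← iteratedDeriv_zero_eq_factorial_smul hpow n,
    iteratedDeriv_comp_line hΩ i n hf (by rwa [hzero]), hzero]

variable [Fintype κ]

/-- The Laplacian in the variables selected by `e`: `Δ_{x_p}` acting on functions of `x`. -/
noncomputable def laplacianAlong (e : κ → ι) (f : (ι → ℝ) → F) (x : ι → ℝ) : F :=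
  ∑ j, pderiv (e j) (pderiv (e j) f) x

theorem laplacianAlong_eq_sub (he : Function.Injective e) (hf : ContDiffAt ℝ 2 f x)
    (hg : ContDiffAt ℝ 2 g x)
    (h : ∀ᶠ z in 𝓝 x, coordRestrict e z = coordRestrict e x → f z = g z)
    (hconst : ∀ j, ∀ x, ∀ t : ℝ, g (x + t • Pi.single (e j) 1) = g x) :
    laplacianAlong e f x = laplacian f x - laplacian g x := by
  rw [laplacian, laplacian, ← Finset.sum_sub_distrib]
  refine Fintype.sum_of_injective e he _ _ (fun i hi => ?_) fun j => ?_
  · rw [pderiv_pderiv_eq_of_eventuallyEq_leaf hi hf hg h, sub_self]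
  · rw [pderiv_eq_zero_of_forall_add_smul (hconst j)]
    simp [pderiv]

theorem iterate_pderiv_laplacianAlong (hΩ : IsOpen Ω) (hf : ContDiffOn ℝ ∞ f Ω) (i : ι) (n : ℕ) :
    Set.EqOn ((pderiv i)^[n] (laplacianAlong e f)) (laplacianAlong e ((pderiv i)^[n] f)) Ω := by
  have hat {h : (ι → ℝ) → F} (hh : ContDiffOn ℝ ∞ h Ω) {x : ι → ℝ} (hx : x ∈ Ω) :
      ContDiffAt ℝ 2 h x := contDiffAt_infty.1 (hh.contDiffAt (hΩ.mem_nhds hx)) 2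
  induction n with
  | zero => exact Set.eqOn_refl _ _
  | succ n ih =>
    intro x hx
    rw [Function.iterate_succ_apply', Function.iterate_succ_apply',
      (pderiv_congr (ih.eventuallyEq_of_mem (hΩ.mem_nhds hx)) i).eq_of_nhds]
    have hn := contDiffOn_iterate_pderiv hΩ hf i n
    generalize (pderiv i)^[n] f = u at hn
    have hsum : pderiv i (laplacianAlong e u) x =
        ∑ j, pderiv i (pderiv (e j) (pderiv (e j) u)) x := by
      have hdiff (j : κ) : DifferentiableAt ℝ (pderiv (e j) (pderiv (e j) u)) x :=
        (hat (contDiffOn_pderiv hΩ (contDiffOn_pderiv hΩ hn _) _) hx).differentiableAt two_ne_zero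
      rw [pderiv, show laplacianAlong e u = fun x => ∑ j, pderiv (e j) (pderiv (e j) u) x from rfl,
        fderiv_fun_sum fun j _ => hdiff j, sum_apply]
      rfl
    rw [hsum]
    refine Finset.sum_congr rfl fun j _ => ?_
    rw [pderiv_comm (hat (contDiffOn_pderiv hΩ hn _) hx)]
    refine (pderiv_congr ?_ _).eq_of_nhds
    filter_upwards [hΩ.mem_nhds hx] with z hz using pderiv_comm (hat hn hz) _ _

end Leaf
end Uniqueness

section Extension

variable {ι κ F : Type*} [DecidableEq ι] [Fintype κ] [NormedAddCommGroup F] [NormedSpace ℝ F]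
  {e : κ → ι} {y : κ → ℝ}

/-- Extension of coordinates by zero along `e`: the inclusion of `ℝ^(p+1)` as `{x_q = 0}`. -/
noncomputable def coordExtend (e : κ → ι) : (κ → ℝ) →L[ℝ] (ι → ℝ) :=
  ∑ j, (ContinuousLinearMap.proj j).smulRight (Pi.single (e j) 1)

theorem coordExtend_eq_sum (e : κ → ι) (y : κ → ℝ) :
    coordExtend e y = ∑ j, y j • Pi.single (e j) 1 := by
  simp [coordExtend, sum_apply]

theorem coordExtend_single [DecidableEq κ] (e : κ → ι) (j : κ) :
    coordExtend e (Pi.single j 1) = Pi.single (e j) 1 := by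
  simp [coordExtend_eq_sum, Pi.single_apply, ite_smul]

theorem coordRestrict_coordExtend (he : Function.Injective e) (y : κ → ℝ) :
    coordRestrict e (coordExtend e y) = y := by
  classical
  rw [coordExtend_eq_sum, map_sum]
  simp only [map_smul, coordRestrict_single he]
  exact (pi_eq_sum_univ' y).symm

theorem IsCliffordMap.map_coordExtend {σ : Finset ι} {a : (ι → ℝ) →L[ℝ] F →L[ℝ] F}
    (ha : IsCliffordMap σ a) (hσ : ∀ j, e j ∉ σ) (y : κ → ℝ) : a (coordExtend e y) = 0 := by
  simp [coordExtend_eq_sum, ha.map_single _ (hσ _)]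

variable [DecidableEq κ] [Fintype ι] {f : (ι → ℝ) → F}

theorem pderiv_comp_coordExtend (hf : DifferentiableAt ℝ f (coordExtend e y)) (j : κ) :
    pderiv j (f ∘ coordExtend e) y = pderiv (e j) f (coordExtend e y) := by
  rw [pderiv, fderiv_comp y hf (coordExtend e).differentiableAt, ContinuousLinearMap.fderiv,
    ContinuousLinearMap.comp_apply, coordExtend_single, pderiv]

theorem laplacian_comp_coordExtend (hf : ContDiffAt ℝ 2 f (coordExtend e y)) :
    laplacian (f ∘ coordExtend e) y = laplacianAlong e f (coordExtend e y) := by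
  refine Finset.sum_congr rfl fun j _ => ?_
  have hnear : pderiv j (f ∘ coordExtend e) =ᶠ[𝓝 y] pderiv (e j) f ∘ coordExtend e :=
    ((coordExtend e).continuous.continuousAt.eventually (hf.eventually (by simp))).mono
      fun y hy => pderiv_comp_coordExtend (hy.differentiableAt two_ne_zero) j
  rw [(pderiv_congr hnear j).eq_of_nhds,
    pderiv_comp_coordExtend (differentiableAt_pderiv hf (e j))]

end Extension

section Recursion

variable {ι κ F : Type*} [DecidableEq ι] [NormedAddCommGroup F] [NormedSpace ℝ F]
  {a : (ι → ℝ) →L[ℝ] F →L[ℝ] F} {σ : Finset ι} {e : κ → ι} {Ω : Set (ι → ℝ)} {f : (ι → ℝ) → F}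
  {b : ℕ → (κ → ℝ) → F} {y : κ → ℝ} {i : ι}

namespace IsCliffordMap

variable (ha : IsCliffordMap σ a)
include ha

theorem map_single_sq (hi : i ∈ σ) : a (Pi.single i 1) ^ 2 = -1 := by
  simp [ha.sq_eq, Pi.single_apply, hi]

theorem neg_one_pow_smul_pow_apply_pow_apply (hi : i ∈ σ) (n : ℕ) (c : F) :
    ((-1 : ℝ) ^ n • a (Pi.single i 1) ^ n) ((a (Pi.single i 1) ^ n) c) = c := by
  rw [smul_apply, ← mul_apply_eq_comp, ← pow_add, ← two_mul, pow_mul, ha.map_single_sq hi,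
    neg_pow, one_pow, mul_one]
  rcases Nat.even_or_odd n with hn | hn <;> simp [hn.neg_one_pow]

variable [Fintype κ]

theorem exists_hasGeometricBound_const (hi : i ∈ σ) {c : ℕ → F} {t : ℝ} (ht : t ≠ 0)
    (hc : Summable fun n => (a (t • Pi.single i 1) ^ n) (c n)) :
    ∃ C M, HasGeometricBound (Set.univ : Set (κ → ℝ)) C M fun n _ => c n := by
  set J := a (Pi.single i 1)
  obtain ⟨C, hC⟩ := hc.tendsto_atTop_zero.norm.isBoundedUnder_le.bddAbove_range
  have hbound (n : ℕ) : ‖c n‖ ≤ C * (‖J‖ / |t|) ^ n := by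
    have hCn : |t| ^ n * ‖(J ^ n) (c n)‖ ≤ C := by
      simpa [map_smul, smul_pow, norm_smul, J] using hC ⟨n, rfl⟩
    calc ‖c n‖ = ‖(J ^ n) ((J ^ n) (c n))‖ := by
          conv_lhs => rw [← ha.neg_one_pow_smul_pow_apply_pow_apply hi n (c n)]
          simp only [smul_apply, norm_smul, norm_pow, norm_neg, norm_one, one_pow, one_mul, J]
      _ ≤ ‖J‖ ^ n * ‖(J ^ n) (c n)‖ := norm_pow_apply_le _ _ _
      _ ≤ ‖J‖ ^ n * (C / |t| ^ n) := by
          gcongr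
          rwa [le_div_iff₀' (by positivity)]
      _ = C * (‖J‖ / |t|) ^ n := by rw [div_pow]; ring
  have hC0 : 0 ≤ C := (norm_nonneg _).trans (hC ⟨0, rfl⟩)
  refine ⟨C, ‖J‖ / |t|, isOpen_univ, convex_univ, hC0, by positivity, fun n => ?_⟩
  exact ⟨contDiffOn_const, fun k hk y hy =>
    ((HasDerivBound.const isOpen_univ zero_le_one (c n)).norm_le k hk y hy).trans
      (by gcongr; exact hbound n)⟩

variable (he : Function.Injective e) (hσ : ∀ j, e j ∉ σ) (hΩ : IsOpen Ω)
include he hσ hΩ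

theorem exists_hasGeometricBound_of_summable (hi : i ∈ σ)
    (hsum : ∀ x ∈ Ω, Summable fun n => (a x ^ n) (b n (coordRestrict e x)))
    (hy : coordExtend e y ∈ Ω) :
    ∃ C M, HasGeometricBound (Set.univ : Set (κ → ℝ)) C M fun n _ => b n y := by
  have hline : ContinuousAt (fun t : ℝ => coordExtend e y + t • (Pi.single i 1 : ι → ℝ)) 0 := by
    fun_prop
  rw [ContinuousAt, zero_smul, add_zero] at hline
  obtain ⟨t, ht, ht0⟩ :=
    ((hline.eventually (hΩ.mem_nhds hy)).filter_mono nhdsWithin_le_nhds |>.and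
      (self_mem_nhdsWithin (s := {(0 : ℝ)}ᶜ))).exists
  have hrange : i ∉ Set.range e := by rintro ⟨j, rfl⟩; exact hσ j hi
  refine ha.exists_hasGeometricBound_const hi ht0 ((hsum _ ht).congr fun n => ?_)
  rw [map_add, map_add, map_smul (coordRestrict e), coordRestrict_single_of_notMem_range hrange,
    coordRestrict_coordExtend he, ha.map_coordExtend hσ, zero_add, smul_zero, add_zero]

variable [Fintype ι] [CompleteSpace F]

theorem eventually_hasSum_laplacianAlong (hi : i ∈ σ) (hf : ContDiffOn ℝ 2 f Ω)
    (hΔ : ∀ x ∈ Ω, laplacian f x = 0)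
    (hsum : ∀ x ∈ Ω, HasSum (fun n => (a x ^ n) (b n (coordRestrict e x))) (f x))
    (hy : coordExtend e y ∈ Ω) :
    ∀ᶠ z in 𝓝 (coordExtend e y), coordRestrict e z = coordRestrict e (coordExtend e y) →
      HasSum (fun n => (a z ^ n) (lapCoeff σ.card n • b (n + 2) y)) (laplacianAlong e f z) := by
  classical
  obtain ⟨C, M, hb⟩ := ha.exists_hasGeometricBound_of_summable he hσ hΩ hi
    (fun x hx => (hsum x hx).summable) hy
  have hM := hb.ratio_nonneg
  obtain ⟨ρ, hρ, hρM⟩ : ∃ ρ > 0, 4 * ρ * M < 1 :=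
    ⟨1 / (4 * (M + 1)), by positivity, by field_simp; linarith⟩
  set g := cliffordSeries a e fun n _ => b n y
  have hW : IsOpen (operatorTube a e Set.univ ρ) := isOpen_operatorTube isOpen_univ ρ
  have hyW : coordExtend e y ∈ operatorTube a e Set.univ ρ :=
    ⟨trivial, by simpa [ha.map_coordExtend hσ] using hρ⟩
  filter_upwards [hΩ.mem_nhds hy, hW.mem_nhds hyW] with z hz hzW hzy
  rw [coordRestrict_coordExtend he] at hzy
  have hfg : ∀ᶠ w in 𝓝 z, coordRestrict e w = coordRestrict e z → f w = g w := by
    filter_upwards [hΩ.mem_nhds hz] with w hw hwz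
    simpa only [g, cliffordSeries, hwz, hzy] using (hsum w hw).tsum_eq.symm
  have hconst (j : κ) (x : ι → ℝ) (t : ℝ) : g (x + t • Pi.single (e j) 1) = g x := by
    simp [g, cliffordSeries, ha.map_single _ (hσ j)]
  have hg : ContDiffAt ℝ 2 g z := (hb.contDiffOn_cliffordSeries hρ hρM).contDiffAt (hW.mem_nhds hzW)
  rw [laplacianAlong_eq_sub he (hf.contDiffAt (hΩ.mem_nhds hz)) hg hfg hconst, hΔ z hz, zero_sub]
  have hlap := (ha.hasSum_laplacian_cliffordSeries he hσ hb hρ hρM hzW).neg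
  simpa only [laplacian_const, zero_sub, map_neg, neg_neg] using hlap

theorem laplacian_coeff_eq_lapCoeff_smul [DecidableEq κ] (hi : i ∈ σ) (hf : ContDiffOn ℝ 2 f Ω)
    (hΔ : ∀ x ∈ Ω, laplacian f x = 0)
    (hsum : ∀ x ∈ Ω, HasSum (fun n => (a x ^ n) (b n (coordRestrict e x))) (f x))
    (hy : coordExtend e y ∈ Ω) (n : ℕ) :
    laplacian (b n) y = lapCoeff σ.card n • b (n + 2) y := by
  have hsmooth : ContDiffOn ℝ ∞ f Ω := contDiffOn_of_laplacian_eq_zero hΩ hf hΔ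
  have hrange : i ∉ Set.range e := by rintro ⟨j, rfl⟩; exact hσ j hi
  set T : F →L[ℝ] F := (n.factorial : ℝ)⁻¹ • (-1 : ℝ) ^ n • a (Pi.single i 1) ^ n
  have hT (c : F) : T (n.factorial • (a (Pi.single i 1) ^ n) c) = c := by
    rw [← Nat.cast_smul_eq_nsmul ℝ, map_smul, smul_apply,
      ha.neg_one_pow_smul_pow_apply_pow_apply hi, smul_inv_smul₀ (by positivity)]
  have hcoeff : b n =ᶠ[𝓝 y] fun y' => T (((pderiv i)^[n] f ∘ coordExtend e) y') := by
    filter_upwards [(coordExtend e).continuous.continuousAt (hΩ.mem_nhds hy)] with y' hy'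
    rw [Function.comp_apply, iterate_pderiv_eq_of_hasSum_pow hΩ hsmooth hy'
      (ha.map_coordExtend hσ y') hrange (c := (b · y')), hT]
    filter_upwards [hΩ.mem_nhds hy'] with z hz hzy
    simpa only [hzy, coordRestrict_coordExtend he] using hsum z hz
  have hn : ContDiffAt ℝ 2 ((pderiv i)^[n] f) (coordExtend e y) :=
    contDiffAt_infty.1 ((contDiffOn_iterate_pderiv hΩ hsmooth i n).contDiffAt (hΩ.mem_nhds hy)) 2
  have hlapSmooth : ContDiffOn ℝ ∞ (laplacianAlong e f) Ω :=
    .sum fun j _ => contDiffOn_pderiv hΩ (contDiffOn_pderiv hΩ hsmooth (e j)) (e j)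
  rw [laplacian_congr hcoeff, laplacian_clm_comp T (hn.comp y (coordExtend e).contDiff.contDiffAt),
    laplacian_comp_coordExtend hn, ← iterate_pderiv_laplacianAlong hΩ hsmooth i n hy,
    iterate_pderiv_eq_of_hasSum_pow hΩ hlapSmooth hy (ha.map_coordExtend hσ y) hrange
      (ha.eventually_hasSum_laplacianAlong he hσ hΩ hi hf hΔ hsum hy), hT]

end IsCliffordMap

end Recursion

section Tubes

variable {ι κ : Type*} [Fintype κ] {e : κ → ι} {σ : Finset ι} {W : Set (κ → ℝ)}
  {δ : (κ → ℝ) → ℝ} {x x' : ι → ℝ}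

/-- The union over `y ∈ W` of the tubes `{x : ‖x_p - y‖ < δ(y), |x_q| < δ(y)}`. Unlike in
`operatorTube`, `x_q` enters through its Euclidean norm, so that the set is rotation invariant. -/
def tubularDomain (e : κ → ι) (σ : Finset ι) (W : Set (κ → ℝ)) (δ : (κ → ℝ) → ℝ) : Set (ι → ℝ) :=
  {x | ∃ y ∈ W, coordRestrict e x ∈ Metric.ball y (δ y) ∧ ∑ i ∈ σ, x i ^ 2 < δ y ^ 2}

theorem isOpen_tubularDomain : IsOpen (tubularDomain e σ W δ) := by
  have hunion : tubularDomain e σ W δ = ⋃ y ∈ W, coordRestrict e ⁻¹' Metric.ball y (δ y) ∩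
      {x | ∑ i ∈ σ, x i ^ 2 < δ y ^ 2} := by
    ext x
    simp only [tubularDomain, Set.mem_ofPred_eq, Set.mem_iUnion, Set.mem_inter_iff,
      Set.mem_preimage, exists_prop]
  rw [hunion]
  exact isOpen_biUnion fun y _ => (Metric.isOpen_ball.preimage (coordRestrict e).continuous).inter
    (isOpen_lt (by fun_prop) continuous_const)

theorem mem_tubularDomain_of_le (hx : x ∈ tubularDomain e σ W δ)
    (hrestrict : coordRestrict e x' = coordRestrict e x)
    (hle : ∑ i ∈ σ, x' i ^ 2 ≤ ∑ i ∈ σ, x i ^ 2) : x' ∈ tubularDomain e σ W δ := by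
  obtain ⟨y, hy, hball, hlt⟩ := hx
  exact ⟨y, hy, hrestrict ▸ hball, hle.trans_lt hlt⟩

theorem coordRestrict_mem_of_mem_tubularDomain (hW : ∀ y ∈ W, Metric.ball y (δ y) ⊆ W)
    (hx : x ∈ tubularDomain e σ W δ) : coordRestrict e x ∈ W := by
  obtain ⟨y, hy, hball, -⟩ := hx
  exact hW y hy hball

variable [DecidableEq ι] {y : κ → ℝ}

theorem coordExtend_apply_of_notMem_range {i : ι} (hi : i ∉ Set.range e) :
    coordExtend e y i = 0 := by
  rw [coordExtend_eq_sum, Finset.sum_apply]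
  refine Finset.sum_eq_zero fun j _ => ?_
  have : i ≠ e j := fun h => hi ⟨j, h.symm⟩
  simp [this]

theorem coordExtend_mem_tubularDomain (he : Function.Injective e) (hσ : ∀ j, e j ∉ σ)
    (hδ : ∀ y ∈ W, 0 < δ y) (hy : y ∈ W) : coordExtend e y ∈ tubularDomain e σ W δ := by
  have hsum : ∑ i ∈ σ, coordExtend e y i ^ 2 = 0 := by
    refine Finset.sum_eq_zero fun i hi => ?_
    rw [coordExtend_apply_of_notMem_range (by rintro ⟨j, rfl⟩; exact hσ j hi), sq, zero_mul]
  exact ⟨y, hy, by simpa [coordRestrict_coordExtend he] using hδ y hy,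
    hsum ▸ pow_pos (hδ y hy) 2⟩

theorem isConnected_of_forall_segment_subset {E : Type*} [AddCommGroup E] [Module ℝ E]
    [TopologicalSpace E] [IsTopologicalAddGroup E] [ContinuousSMul ℝ E] {S Z : Set E}
    (hZ : IsConnected Z)
    (hZS : Z ⊆ S) (h : ∀ x ∈ S, ∃ z ∈ Z, segment ℝ z x ⊆ S) : IsConnected S := by
  obtain ⟨z₀, hz₀⟩ := hZ.nonempty
  refine ⟨⟨z₀, hZS hz₀⟩, isPreconnected_of_forall z₀ fun x hx => ?_⟩
  obtain ⟨z, hz, hseg⟩ := h x hx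
  exact ⟨Z ∪ segment ℝ z x, Set.union_subset hZS hseg, .inl hz₀, .inr (right_mem_segment ℝ z x),
    hZ.isPreconnected.union z hz (left_mem_segment ℝ z x)
      (convex_segment z x).isPreconnected⟩

/-- With `Φ = id` this is the connectedness of the domain itself, with `Φ` the embedding of
`ℝ^(p+1) ⊕ ωℝ` that of its slices. -/
theorem isConnected_preimage_tubularDomain {E : Type*} [NormedAddCommGroup E] [NormedSpace ℝ E]
    (he : Function.Injective e) (hσ : ∀ j, e j ∉ σ) (hδ : ∀ y ∈ W, 0 < δ y)
    (hWball : ∀ y ∈ W, Metric.ball y (δ y) ⊆ W) (hW : IsConnected W) {Φ : E →L[ℝ] ι → ℝ}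
    {s : (κ → ℝ) →L[ℝ] E} (hΦs : ∀ y, Φ (s y) = coordExtend e y) :
    IsConnected (Φ ⁻¹' tubularDomain e σ W δ) := by
  refine isConnected_of_forall_segment_subset (hW.image s s.continuous.continuousOn) ?_
    fun z hz => ?_
  · rintro _ ⟨y, hy, rfl⟩
    rw [Set.mem_preimage, hΦs]
    exact coordExtend_mem_tubularDomain he hσ hδ hy
  set y := coordRestrict e (Φ z)
  refine ⟨s y, ⟨y, coordRestrict_mem_of_mem_tubularDomain hWball hz, rfl⟩, ?_⟩
  rw [segment_eq_image]
  rintro _ ⟨t, ⟨ht₀, ht₁⟩, rfl⟩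
  have hΦ : Φ ((1 - t) • s y + t • z) = (1 - t) • coordExtend e y + t • Φ z := by
    simp only [map_add, map_smul, hΦs]
  rw [Set.mem_preimage, hΦ]
  refine mem_tubularDomain_of_le hz ?_ (Finset.sum_le_sum fun i hi => ?_)
  · rw [map_add, map_smul, map_smul, coordRestrict_coordExtend he, ← add_smul, sub_add_cancel,
      one_smul]
  · have hextend : coordExtend e y i = 0 :=
      coordExtend_apply_of_notMem_range (by rintro ⟨j, rfl⟩; exact hσ j hi)
    simp only [Pi.add_apply, Pi.smul_apply, smul_eq_mul, hextend, mul_zero, zero_add, mul_pow]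
    exact mul_le_of_le_one_left (sq_nonneg _) (pow_le_one₀ ht₀ ht₁)

end Tubes

section LocalExistence

variable {ι κ F : Type*} [NormedAddCommGroup F] [NormedSpace ℝ F]
  {a : (ι → ℝ) →L[ℝ] F →L[ℝ] F} {σ : Finset ι} {e : κ → ι}

theorem cliffordSeries_of_map_eq_zero (b : ℕ → (κ → ℝ) → F) {x : ι → ℝ} (hx : a x = 0) :
    cliffordSeries a e b x = b 0 (coordRestrict e x) := by
  rw [cliffordSeries, tsum_eq_single 0 fun n hn => by rw [hx, zero_pow hn, zero_apply]]
  simp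

variable [DecidableEq ι]

theorem pderiv_cliffordSeries [CompleteSpace F] [Fintype ι] {Ω : Set (ι → ℝ)}
    {b : ℕ → (κ → ℝ) → F} (hΩ : IsOpen Ω)
    (hsmooth : ContDiffOn ℝ ∞ (cliffordSeries a e b) Ω)
    (hsum : ∀ x ∈ Ω, Summable fun n => (a x ^ n) (b n (coordRestrict e x))) {x : ι → ℝ}
    (hx : x ∈ Ω) (hax : a x = 0) {i : ι} (hi : i ∉ Set.range e) :
    pderiv i (cliffordSeries a e b) x = a (Pi.single i 1) (b 1 (coordRestrict e x)) := by
  have hleaf : ∀ᶠ z in 𝓝 x, coordRestrict e z = coordRestrict e x →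
      HasSum (fun n => (a z ^ n) (b n (coordRestrict e x))) (cliffordSeries a e b z) := by
    filter_upwards [hΩ.mem_nhds hx] with z hz hzx
    rw [← hzx]
    exact (hsum z hz).hasSum
  simpa using iterate_pderiv_eq_of_hasSum_pow hΩ hsmooth hx hax hi hleaf 1

namespace IsCliffordMap

variable (ha : IsCliffordMap σ a)
include ha

variable [Fintype ι]

theorem norm_apply_le {x : ι → ℝ} {δ : ℝ} (hδ : 0 ≤ δ) (hx : ∑ i ∈ σ, x i ^ 2 ≤ δ ^ 2) :
    ‖a x‖ ≤ ‖a‖ * δ := by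
  have hrest : a (x - σ.piecewise x 0) = 0 := by
    rw [pi_eq_sum_univ' (x - _), map_sum]
    refine Finset.sum_eq_zero fun i _ => ?_
    by_cases hi : i ∈ σ
    · simp [hi]
    · rw [map_smul, ha.map_single i hi, smul_zero]
  rw [map_sub, sub_eq_zero] at hrest
  rw [hrest]
  refine a.le_opNorm_of_le ((pi_norm_le_iff_of_nonneg hδ).2 fun i => ?_)
  by_cases hi : i ∈ σ
  · rw [Finset.piecewise_eq_of_mem _ _ _ hi]
    exact abs_le_of_sq_le_sq ((Finset.single_le_sum (f := fun i => x i ^ 2)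
      (fun i _ => sq_nonneg _) hi).trans hx) hδ
  · simpa [hi] using hδ

variable [Fintype κ] [DecidableEq κ] [CompleteSpace F] {A₀ A₁ : (κ → ℝ) → F}

theorem laplacian_cliffordSeries_ckCoeff (he : Function.Injective e) (hσ : ∀ j, e j ∉ σ)
    (hpos : 0 < σ.card) {U : Set (κ → ℝ)} {C M ρ : ℝ}
    (hb : HasGeometricBound U C M (ckCoeff σ.card A₀ A₁)) (hρ : 0 < ρ) (hρM : 4 * ρ * M < 1)
    {x : ι → ℝ} (hx : x ∈ operatorTube a e U ρ) :
    laplacian (cliffordSeries a e (ckCoeff σ.card A₀ A₁)) x = 0 := by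
  have hsum := ha.hasSum_laplacian_cliffordSeries he hσ hb hρ hρM hx
  simp only [laplacian_ckCoeff hpos, Pi.smul_apply, sub_self, map_zero] at hsum
  exact hsum.unique hasSum_zero

theorem exists_tube_ckCoeff (he : Function.Injective e) (hσ : ∀ j, e j ∉ σ) (hpos : 0 < σ.card)
    {U : Set (κ → ℝ)} {y : κ → ℝ} (hU : U ∈ 𝓝 y) (hA₀ : AnalyticOnNhd ℝ A₀ U)
    (hA₁ : AnalyticOnNhd ℝ A₁ U) :
    ∃ δ > 0, Metric.ball y δ ⊆ U ∧
      ∀ x, coordRestrict e x ∈ Metric.ball y δ → ∑ i ∈ σ, x i ^ 2 < δ ^ 2 →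
        (Summable fun n => (a x ^ n) (ckCoeff σ.card A₀ A₁ n (coordRestrict e x))) ∧
        ContDiffAt ℝ 2 (cliffordSeries a e (ckCoeff σ.card A₀ A₁)) x ∧
        laplacian (cliffordSeries a e (ckCoeff σ.card A₀ A₁)) x = 0 := by
  obtain ⟨δ, hδ, C, M, hδU, hb⟩ := exists_hasGeometricBound_ckCoeff hpos hU hA₀ hA₁
  have hM := hb.ratio_nonneg
  set ρ : ℝ := 1 / (4 * (M + 1)) with hρdef
  have hρ : 0 < ρ := by positivity
  have hρM : 4 * ρ * M < 1 := by rw [hρdef]; field_simp; linarith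
  set ε := min δ (ρ / (‖a‖ + 1))
  have hε : 0 < ε := by positivity
  have hεball : Metric.ball y ε ⊆ Metric.ball y δ := Metric.ball_subset_ball (min_le_left _ _)
  refine ⟨ε, hε, hεball.trans hδU, fun x hxball hxsq => ?_⟩
  have hax : ‖a x‖ < ρ :=
    calc ‖a x‖ ≤ ‖a‖ * ε := ha.norm_apply_le hε.le hxsq.le
      _ < (‖a‖ + 1) * ε := by linarith
      _ ≤ ρ := by
        rw [← le_div_iff₀' (by positivity)]
        exact min_le_right _ _
  have hx : x ∈ operatorTube a e (Metric.ball y δ) ρ := ⟨hεball hxball, by simpa using hax⟩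
  exact ⟨hb.summable_term hρ hρM hx,
    (hb.contDiffOn_cliffordSeries hρ hρM).contDiffAt
      ((isOpen_operatorTube hb.isOpen ρ).mem_nhds hx),
    ha.laplacian_cliffordSeries_ckCoeff he hσ hpos hb hρ hρM hx⟩

theorem exists_tubularDomain_ckCoeff (he : Function.Injective e) (hσ : ∀ j, e j ∉ σ)
    (hpos : 0 < σ.card) {W : Set (κ → ℝ)} (hW : IsOpen W) (hA₀ : AnalyticOnNhd ℝ A₀ W)
    (hA₁ : AnalyticOnNhd ℝ A₁ W) :
    ∃ δ : (κ → ℝ) → ℝ, (∀ y ∈ W, 0 < δ y) ∧ (∀ y ∈ W, Metric.ball y (δ y) ⊆ W) ∧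
      (∀ x ∈ tubularDomain e σ W δ,
        Summable fun n => (a x ^ n) (ckCoeff σ.card A₀ A₁ n (coordRestrict e x))) ∧
      ContDiffOn ℝ 2 (cliffordSeries a e (ckCoeff σ.card A₀ A₁)) (tubularDomain e σ W δ) ∧
      ∀ x ∈ tubularDomain e σ W δ, laplacian (cliffordSeries a e (ckCoeff σ.card A₀ A₁)) x = 0 := by
  choose! δ hδ hball htube using fun y (hy : y ∈ W) =>
    ha.exists_tube_ckCoeff he hσ hpos (hW.mem_nhds hy) hA₀ hA₁
  refine ⟨δ, hδ, hball, ?_, ?_, ?_⟩ <;> rintro x ⟨y, hy, hx, hxq⟩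
  · exact (htube y hy x hx hxq).1
  · exact (htube y hy x hx hxq).2.1.contDiffWithinAt
  · exact (htube y hy x hx hxq).2.2

end IsCliffordMap
end LocalExistence

section Algebra

theorem bilin_sum_smul_self {ι M N : Type*} [AddCommGroup M] [Module ℝ M] [AddCommGroup N]
    [Module ℝ N] (B : M →ₗ[ℝ] M →ₗ[ℝ] N) {S : Finset ι} {v : ι → M} (x : ι → ℝ)
    (hv : ∀ i ∈ S, ∀ j ∈ S, i ≠ j → B (v i) (v j) = -B (v j) (v i)) :
    B (∑ i ∈ S, x i • v i) (∑ i ∈ S, x i • v i) = ∑ i ∈ S, x i ^ 2 • B (v i) (v i) := by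
  classical
  induction S using Finset.induction_on with
  | empty => simp
  | insert i S hi ih =>
    have hcross : B (∑ j ∈ S, x j • v j) (v i) = -B (v i) (∑ j ∈ S, x j • v j) := by
      simp only [map_sum, map_smul, LinearMap.sum_apply, LinearMap.smul_apply,
        ← Finset.sum_neg_distrib, ← smul_neg]
      refine Finset.sum_congr rfl fun j hj => ?_
      rw [hv j (Finset.mem_insert_of_mem hj) i (Finset.mem_insert_self i S)
        (ne_of_mem_of_not_mem hj hi)]
    rw [Finset.sum_insert hi, Finset.sum_insert hi, ← ih fun j hj k hk =>
      hv j (Finset.mem_insert_of_mem hj) k (Finset.mem_insert_of_mem hk)]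
    simp only [map_add, map_smul, LinearMap.add_apply, LinearMap.smul_apply, hcross, sq]
    module

variable {A : Type*} [NormedAddCommGroup A] [NormedSpace ℝ A] [Mul A] [One A]

variable (A) in
/-- A real unital left alternative algebra with continuous left multiplications, of any dimension.
Like `IsAltStarAlg` this is a predicate on a multiplication that is not assumed associative. -/
structure IsLeftAlternativeAlg : Prop where
  mul_add : ∀ a b c : A, a * (b + c) = a * b + a * c
  add_mul : ∀ a b c : A, (a + b) * c = a * c + b * c
  smul_mul : ∀ (r : ℝ) (a b : A), (r • a) * b = r • (a * b)
  mul_smul : ∀ (r : ℝ) (a b : A), a * (r • b) = r • (a * b)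
  one_mul : ∀ a : A, 1 * a = a
  mul_one : ∀ a : A, a * 1 = a
  alt_left : ∀ a b : A, a * (a * b) = a * a * b
  continuous_mul_left : ∀ a : A, Continuous (a * ·)

/-- The units `v_{p+1}, …, v_m` are pairwise anticommuting square roots of `-1`. Nothing is asked of
`v_0, …, v_p`, which multiply none of the coefficients. -/
structure IsCliffordFrame (v : ℕ → A) (m p : ℕ) : Prop where
  mul_self : ∀ s, p < s → s ≤ m → v s * v s = -1
  anticomm : ∀ s t, p < s → s ≤ m → p < t → t ≤ m → s ≠ t → v s * v t = -(v t * v s)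

namespace IsLeftAlternativeAlg

variable (hA : IsLeftAlternativeAlg A)

/-- Multiplication as a bilinear map. -/
def bilin : A →ₗ[ℝ] A →ₗ[ℝ] A :=
  LinearMap.mk₂ ℝ (· * ·) hA.add_mul hA.smul_mul hA.mul_add hA.mul_smul

theorem bilin_apply (a b : A) : hA.bilin a b = a * b :=
  rfl

/-- Left multiplication by `a` as a continuous operator. -/
def leftMul (a : A) : A →L[ℝ] A :=
  ⟨hA.bilin a, hA.continuous_mul_left a⟩

theorem leftMul_apply (a b : A) : hA.leftMul a b = a * b :=
  rfl

include hA

theorem neg_one_mul (b : A) : -1 * b = -b := by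
  rw [← neg_one_smul ℝ (1 : A), hA.smul_mul, hA.one_mul, neg_one_smul]

theorem one_ne_zero [Nontrivial A] : (1 : A) ≠ 0 := fun h => by
  obtain ⟨a, ha⟩ := exists_ne (0 : A)
  rw [← hA.one_mul a, h] at ha
  exact ha (congrArg (· a) hA.bilin.map_zero)

theorem apow_mul_of_mul_self {a : A} {c : ℝ} (ha : a * a = c • (1 : A)) (n : ℕ) (b : A) :
    apow a n * b = (hA.leftMul a ^ n) b := by
  have hsq (b : A) : a * (a * b) = c • b := by rw [hA.alt_left, ha, hA.smul_mul, hA.one_mul]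
  induction n using Nat.twoStepInduction with
  | zero => exact hA.one_mul b
  | one => simp [apow, hA.mul_one, leftMul_apply]
  | more n ih _ =>
    have hapow : apow a (n + 2) = a * (a * apow a n) := by
      simp only [apow, Function.iterate_succ_apply']
    rw [hapow, hsq, hA.smul_mul, ih, pow_succ', pow_succ']
    exact (hsq _).symm

end IsLeftAlternativeAlg
end Algebra

section Coordinates

variable {m p : ℕ}

/-- The inclusion of the indices `0, …, p` of `x_p` into `0, …, m`. -/
def baseIndex (hp : p < m) : Fin (p + 1) → Fin (m + 1) :=
  Fin.castLE (Nat.succ_le_succ hp.le)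

/-- The indices `p + 1, …, m` of the coordinates of `x_q`. -/
def fibreIndices (m p : ℕ) : Finset (Fin (m + 1)) :=
  {s | p < (s : ℕ)}

theorem mem_fibreIndices {s : Fin (m + 1)} : s ∈ fibreIndices m p ↔ p < (s : ℕ) := by
  simp [fibreIndices]

theorem card_fibreIndices (hp : p < m) : (fibreIndices m p).card = m - p := by
  have h : fibreIndices m p = Finset.Ioi (⟨p, by omega⟩ : Fin (m + 1)) := by
    ext s
    simp [mem_fibreIndices, Fin.lt_def]
  rw [h, Fin.card_Ioi, Fin.val_mk]
  omega

variable (hp : p < m)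

theorem baseIndex_injective : Function.Injective (baseIndex hp) :=
  Fin.castLE_injective _

theorem baseIndex_notMem (j : Fin (p + 1)) : baseIndex hp j ∉ fibreIndices m p := by
  simpa [mem_fibreIndices, baseIndex] using Nat.lt_succ_iff.1 j.2

theorem mem_fibreIndices_iff_notMem_range {s : Fin (m + 1)} :
    s ∈ fibreIndices m p ↔ s ∉ Set.range (baseIndex hp) := by
  simp [mem_fibreIndices, baseIndex, Fin.range_castLE]

theorem projP_eq_coordRestrict (x : Fin (m + 1) → ℝ) :
    projP m p x = coordRestrict (baseIndex hp) x := by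
  ext j
  exact dif_pos (by omega)

theorem injP_eq_coordExtend (y : Fin (p + 1) → ℝ) :
    injP m p y = coordExtend (baseIndex hp) y := by
  ext s
  by_cases hs : s ∈ fibreIndices m p
  · rw [coordExtend_apply_of_notMem_range ((mem_fibreIndices_iff_notMem_range hp).1 hs), injP,
      dif_neg (by rw [mem_fibreIndices] at hs; omega)]
  · obtain ⟨j, rfl⟩ := not_not.1 (mt (mem_fibreIndices_iff_notMem_range hp).2 hs)
    exact (dif_pos j.2).trans
      (congrFun (coordRestrict_coordExtend (baseIndex_injective hp) y) j).symm

theorem sum_xqpart {N : Type*} [AddCommMonoid N] (x : Fin (m + 1) → ℝ)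
    {g : Fin (m + 1) → ℝ → N} (hg : ∀ s, g s 0 = 0) :
    ∑ s, g s (xqpart m p x s) = ∑ s ∈ fibreIndices m p, g s (x s) := by
  rw [fibreIndices, Finset.sum_filter]
  refine Finset.sum_congr rfl fun s _ => ?_
  by_cases hs : (s : ℕ) ≤ p
  · rw [xqpart, if_pos hs, if_neg hs.not_gt, hg]
  · rw [xqpart, if_neg hs, if_pos (not_le.1 hs)]

theorem rad_sq (x : Fin (m + 1) → ℝ) : rad m p x ^ 2 = ∑ s ∈ fibreIndices m p, x s ^ 2 := by
  rw [rad, Real.sq_sqrt (by positivity),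
    sum_xqpart (g := fun _ t => t ^ 2) x fun _ => zero_pow two_ne_zero]

theorem xqpart_eq_self {w : Fin (m + 1) → ℝ} (hw : ∀ s : Fin (m + 1), (s : ℕ) ≤ p → w s = 0) :
    xqpart m p w = w := by
  ext s
  by_cases hs : (s : ℕ) ≤ p
  · rw [xqpart, if_pos hs, hw s hs]
  · rw [xqpart, if_neg hs]

end Coordinates

section LeftMultiplication

variable {A : Type*} [NormedAddCommGroup A] [NormedSpace ℝ A] {v : ℕ → A} {m p : ℕ}

theorem emb_xqpart (x : Fin (m + 1) → ℝ) :
    emb v m (xqpart m p x) = ∑ s ∈ fibreIndices m p, x s • v s :=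
  sum_xqpart (g := fun s t => t • v s) x fun _ => zero_smul ℝ _

variable [Mul A] [One A] (hA : IsLeftAlternativeAlg A)

variable (v m p) in
/-- Left multiplication by `x_q`, as a linear map of `x` with values in the associative algebra of
continuous operators on `A`. -/
noncomputable def leftMulFibre : (Fin (m + 1) → ℝ) →L[ℝ] A →L[ℝ] A :=
  ∑ s ∈ fibreIndices m p,
    (ContinuousLinearMap.proj (R := ℝ) (φ := fun _ => ℝ) s).smulRight (hA.leftMul (v s))

theorem leftMulFibre_apply (x : Fin (m + 1) → ℝ) (b : A) :
    leftMulFibre v m p hA x b = emb v m (xqpart m p x) * b := by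
  rw [emb_xqpart, ← hA.bilin_apply, map_sum, LinearMap.sum_apply]
  simp [leftMulFibre, hA.leftMul_apply, hA.bilin_apply]

theorem leftMulFibre_single_of_mem {s : Fin (m + 1)} (hs : s ∈ fibreIndices m p) (b : A) :
    leftMulFibre v m p hA (Pi.single s 1) b = v s * b := by
  simp [leftMulFibre_apply, emb_xqpart, Pi.single_apply, hs]

include hA

theorem IsCliffordFrame.emb_xqpart_mul_self (hv : IsCliffordFrame v m p) (x : Fin (m + 1) → ℝ) :
    emb v m (xqpart m p x) * emb v m (xqpart m p x) =
      -(∑ s ∈ fibreIndices m p, x s ^ 2) • (1 : A) := by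
  rw [emb_xqpart, ← hA.bilin_apply, bilin_sum_smul_self]
  · rw [neg_smul, Finset.sum_smul, ← Finset.sum_neg_distrib]
    refine Finset.sum_congr rfl fun s hs => ?_
    rw [hA.bilin_apply, hv.mul_self s (mem_fibreIndices.1 hs) (Nat.lt_succ_iff.1 s.2), smul_neg]
  · intro s hs t ht hst
    exact hv.anticomm s t (mem_fibreIndices.1 hs) (Nat.lt_succ_iff.1 s.2) (mem_fibreIndices.1 ht)
      (Nat.lt_succ_iff.1 t.2) (Fin.val_ne_of_ne hst)

namespace IsCliffordFrame

variable (hv : IsCliffordFrame v m p)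
include hv

theorem isCliffordMap_leftMulFibre :
    IsCliffordMap (fibreIndices m p) (leftMulFibre v m p hA) where
  map_single s hs := by
    rw [leftMulFibre, sum_apply]
    refine Finset.sum_eq_zero fun t ht => ?_
    simp [ne_of_mem_of_not_mem ht hs]
  sq_eq x := by
    ext b
    rw [sq, mul_apply_eq_comp, leftMulFibre_apply, leftMulFibre_apply, hA.alt_left,
      hv.emb_xqpart_mul_self hA, hA.smul_mul, hA.one_mul]
    rfl

theorem apow_emb_mul (x : Fin (m + 1) → ℝ) (n : ℕ) (b : A) :
    apow (emb v m (xqpart m p x)) n * b = (leftMulFibre v m p hA x ^ n) b := by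
  rw [hA.apow_mul_of_mul_self (hv.emb_xqpart_mul_self hA x)]
  congr 2
  ext c
  rw [leftMulFibre_apply, hA.leftMul_apply]

theorem sum_sq_eq_one_of_mem_Sph [Nontrivial A] {w : Fin (m + 1) → ℝ} (hw : w ∈ Sph v m p) :
    ∑ s ∈ fibreIndices m p, w s ^ 2 = 1 := by
  have h : emb v m w * emb v m w = -1 := hw.2
  rw [← xqpart_eq_self hw.1, hv.emb_xqpart_mul_self hA, neg_smul, neg_inj] at h
  exact smul_left_injective ℝ hA.one_ne_zero (h.trans (one_smul ℝ 1).symm)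

theorem dop_cliffordSeries [CompleteSpace A] (hp : p < m) {Ω : Set (Fin (m + 1) → ℝ)}
    {b : ℕ → (Fin (p + 1) → ℝ) → A} (hΩ : IsOpen Ω)
    (hsmooth : ContDiffOn ℝ ∞ (cliffordSeries (leftMulFibre v m p hA) (baseIndex hp) b) Ω)
    (hsum : ∀ x ∈ Ω, Summable fun n =>
      (leftMulFibre v m p hA x ^ n) (b n (coordRestrict (baseIndex hp) x)))
    {y : Fin (p + 1) → ℝ} (hy : coordExtend (baseIndex hp) y ∈ Ω) :
    Dop v m (p + 1) m (cliffordSeries (leftMulFibre v m p hA) (baseIndex hp) b)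
      (coordExtend (baseIndex hp) y) = -((m - p : ℕ) : ℝ) • b 1 y := by
  have hterm (s : Fin (m + 1)) (hs : s ∈ fibreIndices m p) :
      v s * pdF m s (cliffordSeries (leftMulFibre v m p hA) (baseIndex hp) b)
        (coordExtend (baseIndex hp) y) = -b 1 y := by
    have hpderiv := pderiv_cliffordSeries hΩ hsmooth hsum hy
      ((hv.isCliffordMap_leftMulFibre hA).map_coordExtend (baseIndex_notMem hp) y)
      ((mem_fibreIndices_iff_notMem_range hp).1 hs)
    rw [leftMulFibre_single_of_mem hA hs, coordRestrict_coordExtend (baseIndex_injective hp)]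
      at hpderiv
    calc v s * pdF m s _ _ = v s * (v s * b 1 y) := congrArg (v s * ·) hpderiv
      _ = -b 1 y := by
        rw [hA.alt_left, hv.mul_self s (mem_fibreIndices.1 hs) (Nat.lt_succ_iff.1 s.2),
          hA.neg_one_mul]
  have hif (s : Fin (m + 1)) : p + 1 ≤ (s : ℕ) ∧ (s : ℕ) ≤ m ↔ p < (s : ℕ) := by omega
  simp only [Dop, hif]
  rw [← Finset.sum_filter, ← fibreIndices, Finset.sum_congr rfl hterm, Finset.sum_const,
    card_fibreIndices hp, neg_smul, smul_neg, Nat.cast_smul_eq_nsmul]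

end IsCliffordFrame
end LeftMultiplication

section PartialSymmetry

variable {A : Type*} [NormedAddCommGroup A] [NormedSpace ℝ A] [Mul A] [One A]
  {v : ℕ → A} {m p : ℕ} {W : Set (Fin (p + 1) → ℝ)} {δ : (Fin (p + 1) → ℝ) → ℝ}

theorem coordRestrict_eq_zero_of_mem_Sph (hp : p < m) {w : Fin (m + 1) → ℝ}
    (hw : w ∈ Sph v m p) : coordRestrict (baseIndex hp) w = 0 := by
  ext j
  exact hw.1 _ (Nat.lt_succ_iff.1 j.2)

theorem sliceDomain_tubularDomain (hp : p < m) (hδ : ∀ y ∈ W, 0 < δ y)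
    (hball : ∀ y ∈ W, Metric.ball y (δ y) ⊆ W) (hW : IsConnected W) :
    SliceDomain v m p (tubularDomain (baseIndex hp) (fibreIndices m p) W δ) := by
  refine ⟨isOpen_tubularDomain, ?_, ?_, fun w _ => ?_⟩
  · exact isConnected_preimage_tubularDomain (Φ := .id ℝ _) (baseIndex_injective hp)
      (baseIndex_notMem hp) hδ hball hW fun _ => rfl
  · obtain ⟨y, hy⟩ := hW.nonempty
    refine ⟨_, coordExtend_mem_tubularDomain (baseIndex_injective hp) (baseIndex_notMem hp) hδ hy,
      ?_⟩
    rw [← injP_eq_coordExtend hp]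
    ext s
    simp only [xqpart, injP, Pi.zero_apply]
    split_ifs <;> first | rfl | omega
  · have hslice : sliceSet m p (tubularDomain (baseIndex hp) (fibreIndices m p) W δ) w =
        (coordExtend (baseIndex hp)).coprod (.toSpanSingleton ℝ w) ⁻¹'
          tubularDomain (baseIndex hp) (fibreIndices m p) W δ := by
      ext z
      simp [sliceSet, pt, injP_eq_coordExtend hp]
    rw [hslice]
    exact isConnected_preimage_tubularDomain (s := .inl ℝ _ _) (baseIndex_injective hp)
      (baseIndex_notMem hp) hδ hball hW fun y => by simp

theorem IsCliffordFrame.pSym_tubularDomain [Nontrivial A] (hA : IsLeftAlternativeAlg A)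
    (hv : IsCliffordFrame v m p) (hp : p < m) :
    PSym v m p (tubularDomain (baseIndex hp) (fibreIndices m p) W δ) := by
  intro x hx w hw
  refine mem_tubularDomain_of_le hx ?_ (le_of_eq ?_)
  · rw [map_add, map_smul, coordRestrict_eq_zero_of_mem_Sph hp hw, smul_zero, add_zero]
    ext j
    exact if_pos (Nat.lt_succ_iff.1 j.2)
  · have hcoord (s : Fin (m + 1)) (hs : s ∈ fibreIndices m p) :
        (xppart m p x + rad m p x • w) s ^ 2 = rad m p x ^ 2 * w s ^ 2 := by
      have hs' : ¬ (s : ℕ) ≤ p := (mem_fibreIndices.1 hs).not_ge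
      simp [xppart, hs', mul_pow]
    rw [Finset.sum_congr rfl hcoord, ← Finset.mul_sum, hv.sum_sq_eq_one_of_mem_Sph hA hw, mul_one,
      rad_sq]

end PartialSymmetry

section Extension

variable {A : Type*} [NormedAddCommGroup A] [NormedSpace ℝ A] [CompleteSpace A] [Mul A] [One A]
  {v : ℕ → A} {m p : ℕ} {A₀ A₁ : (Fin (p + 1) → ℝ) → A}

theorem IsCliffordFrame.eqOn_ckCoeff_of_harmonic (hA : IsLeftAlternativeAlg A)
    (hv : IsCliffordFrame v m p) (hp : p < m) {W : Set (Fin (p + 1) → ℝ)} (hW : IsOpen W)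
    {Ω : Set (Fin (m + 1) → ℝ)} (hΩ : IsOpen Ω) (hWΩ : injP m p '' W ⊆ Ω)
    {b : ℕ → (Fin (p + 1) → ℝ) → A}
    (hsum : ∀ x ∈ Ω, Summable fun n => apow (emb v m (xqpart m p x)) n * b n (projP m p x))
    (hharm : Harmonic m (fun x => ∑' n, apow (emb v m (xqpart m p x)) n * b n (projP m p x)) Ω)
    (n : ℕ) : Set.EqOn (b n) (ckCoeff (m - p) (b 0) (b 1) n) W := by
  refine eqOn_ckCoeff hW (Nat.sub_pos_of_lt hp) (fun n y hy => ?_) n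
  have hyΩ := hWΩ (Set.mem_image_of_mem _ hy)
  rw [injP_eq_coordExtend hp] at hyΩ
  rw [← card_fibreIndices hp]
  refine (hv.isCliffordMap_leftMulFibre hA).laplacian_coeff_eq_lapCoeff_smul
    (baseIndex_injective hp) (baseIndex_notMem hp) hΩ
    (mem_fibreIndices.2 (show p < ((Fin.last m : Fin (m + 1)) : ℕ) from hp)) hharm.1 hharm.2
    (fun x hx => ?_) hyΩ n
  simpa only [hv.apow_emb_mul hA, projP_eq_coordRestrict hp] using (hsum x hx).hasSum

theorem IsCliffordFrame.exists_harmonic_extension [Nontrivial A] (hA : IsLeftAlternativeAlg A)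
    (hv : IsCliffordFrame v m p) (hp : p < m) {W : Set (Fin (p + 1) → ℝ)} (hW : IsOpen W)
    (hWconn : IsConnected W) (hA₀ : AnalyticOnNhd ℝ A₀ W) (hA₁ : AnalyticOnNhd ℝ A₁ W) :
    ∃ Ω, PSym v m p Ω ∧ SliceDomain v m p Ω ∧ injP m p '' W ⊆ Ω ∧ Ω ⊆ Omega0star m p W ∧
      (∀ x ∈ Ω, Summable fun n =>
        apow (emb v m (xqpart m p x)) n * ckCoeff (m - p) A₀ A₁ n (projP m p x)) ∧
      Harmonic m (fun x => ∑' n,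
        apow (emb v m (xqpart m p x)) n * ckCoeff (m - p) A₀ A₁ n (projP m p x)) Ω ∧
      ∀ y ∈ W,
        ∑' n, apow (emb v m (xqpart m p (injP m p y))) n *
          ckCoeff (m - p) A₀ A₁ n (projP m p (injP m p y)) = A₀ y ∧
        Dop v m (p + 1) m (fun x => ∑' n,
          apow (emb v m (xqpart m p x)) n * ckCoeff (m - p) A₀ A₁ n (projP m p x)) (injP m p y) =
            -((m - p : ℕ) : ℝ) • A₁ y := by
  have he := baseIndex_injective hp
  have hσ := baseIndex_notMem hp
  have ha := hv.isCliffordMap_leftMulFibre hA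
  have hcard := card_fibreIndices hp
  obtain ⟨δ, hδ, hball, hsum, hsmooth, hΔ⟩ :=
    ha.exists_tubularDomain_ckCoeff he hσ (by omega) hW hA₀ hA₁
  rw [hcard] at hsum hsmooth hΔ
  have hmem (y) (hy : y ∈ W) := coordExtend_mem_tubularDomain he hσ hδ hy
  refine ⟨tubularDomain (baseIndex hp) (fibreIndices m p) W δ, hv.pSym_tubularDomain hA hp,
    sliceDomain_tubularDomain hp hδ hball hWconn, ?_, fun x hx => ?_, ?_⟩
  · rintro _ ⟨y, hy, rfl⟩
    exact injP_eq_coordExtend hp y ▸ hmem y hy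
  · rw [Omega0star, Set.mem_ofPred_eq, projP_eq_coordRestrict hp]
    exact coordRestrict_mem_of_mem_tubularDomain hball hx
  simp only [hv.apow_emb_mul hA, projP_eq_coordRestrict hp,
    injP_eq_coordExtend hp]
  refine ⟨hsum, ⟨hsmooth, hΔ⟩, fun y hy => ⟨?_, ?_⟩⟩
  · exact (cliffordSeries_of_map_eq_zero _ (ha.map_coordExtend hσ y)).trans
      (congrArg A₀ (coordRestrict_coordExtend he y))
  · exact hv.dop_cliffordSeries hA hp isOpen_tubularDomain
      (contDiffOn_of_laplacian_eq_zero isOpen_tubularDomain hsmooth hΔ) hsum (hmem y hy)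

end Extension

theorem IsAltStarAlg.isLeftAlternativeAlg {A : Type*} [NormedAddCommGroup A] [NormedSpace ℝ A]
    [Mul A] [One A] {conj : A → A} (H : IsAltStarAlg A conj) : IsLeftAlternativeAlg A where
  mul_add := H.mul_add'
  add_mul := H.add_mul'
  smul_mul := H.smul_mul'
  mul_smul := H.mul_smul'
  one_mul := H.one_mul'
  mul_one := H.mul_one'
  alt_left := H.alt_left
  continuous_mul_left a :=
    have := H.finDim
    LinearMap.continuous_of_finiteDimensional
      { toFun := (a * ·), map_add' := H.mul_add' a, map_smul' := fun r b => H.mul_smul' r a b }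

theorem IsHypBasis.isCliffordFrame {A : Type*} [NormedAddCommGroup A] [NormedSpace ℝ A] [Mul A]
    [One A] {conj : A → A} (H : IsAltStarAlg A conj) {v : ℕ → A} {m : ℕ}
    (hv : IsHypBasis A conj v m) (p : ℕ) : IsCliffordFrame v m p where
  mul_self s hps hs := by
    have hconj : v s = (-1 : ℝ) • conj (v s) := by
      rw [neg_one_smul]
      exact eq_neg_of_add_eq_zero_left (hv.trace_zero s (by omega) hs)
    calc v s * v s = v s * ((-1 : ℝ) • conj (v s)) := by rw [← hconj]
      _ = -1 := by rw [H.mul_smul', hv.norm_one s (by omega) hs, neg_one_smul]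
  anticomm s t hps hs hpt ht hst := hv.anticomm s t (by omega) hs (by omega) ht hst

theorem harmonic_generalized_CK_extension_general
    {A : Type*} [NormedAddCommGroup A] [NormedSpace ℝ A] [CompleteSpace A] [Nontrivial A]
    [Mul A] [One A] (hA : IsLeftAlternativeAlg A)
    {v : ℕ → A} {m p : ℕ} (hv : IsCliffordFrame v m p) (hp : p < m)
    {Ω₀ : Set (Fin (p + 1) → ℝ)} (hΩ₀ : IsOpen Ω₀) (hΩ₀conn : IsConnected Ω₀)
    {A₀ A₁ : (Fin (p + 1) → ℝ) → A}
    (hA₀ : AnalyticOnNhd ℝ A₀ Ω₀) (hA₁ : AnalyticOnNhd ℝ A₁ Ω₀) :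
    ∃ Aseq : ℕ → (Fin (p + 1) → ℝ) → A,
      Aseq 0 = A₀ ∧ Aseq 1 = A₁ ∧
      (∀ k, AnalyticOnNhd ℝ (Aseq k) Ω₀) ∧
      (∃ Ω : Set (Fin (m + 1) → ℝ),
        PSym v m p Ω ∧ SliceDomain v m p Ω ∧
        injP m p '' Ω₀ ⊆ Ω ∧ Ω ⊆ Omega0star m p Ω₀ ∧
        (∀ x ∈ Ω, Summable fun k : ℕ =>
          apow (emb v m (xqpart m p x)) k * Aseq k (projP m p x)) ∧
        Harmonic m (fun x => ∑' k : ℕ,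
          apow (emb v m (xqpart m p x)) k * Aseq k (projP m p x)) Ω ∧
        ∀ y ∈ Ω₀,
          ∑' k : ℕ, apow (emb v m (xqpart m p (injP m p y))) k *
            Aseq k (projP m p (injP m p y)) = A₀ y ∧
          Dop v m (p + 1) m (fun x => ∑' k : ℕ,
            apow (emb v m (xqpart m p x)) k * Aseq k (projP m p x)) (injP m p y) =
              -((m - p : ℕ) : ℝ) • A₁ y) ∧
      (∀ k : ℕ, ∀ y ∈ Ω₀,
        Aseq (2 * k) y =
          (Real.Gamma (((m - p : ℕ) : ℝ) / 2) /
              (2 ^ (2 * k) * (k.factorial : ℝ) *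
                Real.Gamma ((k : ℝ) + ((m - p : ℕ) : ℝ) / 2))) •
            lapIterP p k A₀ y ∧
        Aseq (2 * k + 1) y =
          (Real.Gamma (((m - p : ℕ) : ℝ) / 2 + 1) /
              (2 ^ (2 * k) * (k.factorial : ℝ) *
                Real.Gamma ((k : ℝ) + ((m - p : ℕ) : ℝ) / 2 + 1))) •
            lapIterP p k A₁ y) ∧
      (∀ Bseq : ℕ → (Fin (p + 1) → ℝ) → A, Bseq 0 = A₀ → Bseq 1 = A₁ →
        (∃ Ω' : Set (Fin (m + 1) → ℝ), IsOpen Ω' ∧ injP m p '' Ω₀ ⊆ Ω' ∧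
          (∀ x ∈ Ω', Summable fun k : ℕ =>
            apow (emb v m (xqpart m p x)) k * Bseq k (projP m p x)) ∧
          Harmonic m (fun x => ∑' k : ℕ,
            apow (emb v m (xqpart m p x)) k * Bseq k (projP m p x)) Ω') →
        ∀ k, Set.EqOn (Bseq k) (Aseq k) Ω₀) := by
  have hq := Nat.sub_pos_of_lt hp
  refine ⟨ckCoeff (m - p) A₀ A₁, rfl, rfl, analyticOnNhd_ckCoeff hA₀ hA₁,
    hv.exists_harmonic_extension hA hp hΩ₀ hΩ₀conn hA₀ hA₁, fun k y _ => ⟨?_, ?_⟩, ?_⟩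
  · exact congrFun (ckCoeff_two_mul hq A₀ A₁ k) y
  · rw [add_assoc (k : ℝ)]
    exact congrFun (ckCoeff_two_mul_add_one hq A₀ A₁ k) y
  · rintro B rfl rfl ⟨Ω', hΩ', hsub, hsum, hharm⟩
    exact hv.eqOn_ckCoeff_of_harmonic hA hp hΩ₀ hΩ' hsub hsum hharm

/-- **Harmonic generalized CK-extension.** Given real analytic `A₀, A₁` on a domain
`Ω₀ ⊆ ℝ^{p+1}`, there is a unique sequence of real analytic functions `A_k` (`k ≥ 2`)
on `Ω₀` such that `Σ_k x_q^k A_k(x_p)` converges on a p-symmetric slice domain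
`Ω₀ ⊂ Ω ⊆ Ω₀*` to a harmonic function `f`; the coefficients are necessarily
`A_{2k} = (Γ(q/2)/(2^{2k} k! Γ(k+q/2))) Δ_{x_p}^k A₀` and
`A_{2k+1} = (Γ(q/2+1)/(2^{2k} k! Γ(k+q/2+1))) Δ_{x_p}^k A₁`, and `f` satisfies the
initial conditions `f|_{x_q=0} = A₀` and `(D_{x_q} f)|_{x_q=0} = -q A₁`. -/
theorem harmonic_generalized_CK_extension
    {A : Type*} [NormedAddCommGroup A] [NormedSpace ℝ A] [Mul A] [One A]
    (conj : A → A) (H : IsAltStarAlg A conj)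
    (v : ℕ → A) (m p : ℕ) (hv : IsHypBasis A conj v m) (hp : p < m)
    (Ω₀ : Set (Fin (p + 1) → ℝ)) (hΩ₀ : IsOpen Ω₀) (hΩ₀conn : IsConnected Ω₀)
    (A₀ A₁ : (Fin (p + 1) → ℝ) → A)
    (hA₀ : AnalyticOnNhd ℝ A₀ Ω₀) (hA₁ : AnalyticOnNhd ℝ A₁ Ω₀) :
    ∃ Aseq : ℕ → (Fin (p + 1) → ℝ) → A,
      -- existence:
      Aseq 0 = A₀ ∧ Aseq 1 = A₁ ∧
      (∀ k, AnalyticOnNhd ℝ (Aseq k) Ω₀) ∧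
      (∃ Ω : Set (Fin (m + 1) → ℝ),
        PSym v m p Ω ∧ SliceDomain v m p Ω ∧
        injP m p '' Ω₀ ⊆ Ω ∧ Ω ⊆ Omega0star m p Ω₀ ∧
        (∀ x ∈ Ω, Summable (fun k : ℕ =>
          apow (emb v m (xqpart m p x)) k * Aseq k (projP m p x))) ∧
        Harmonic m (fun x => ∑' k : ℕ,
          apow (emb v m (xqpart m p x)) k * Aseq k (projP m p x)) Ω ∧
        -- the initial conditions:
        (∀ y ∈ Ω₀,
          (fun x => ∑' k : ℕ,
            apow (emb v m (xqpart m p x)) k * Aseq k (projP m p x)) (injP m p y) =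
              A₀ y ∧
          Dop v m (p + 1) m (fun x => ∑' k : ℕ,
            apow (emb v m (xqpart m p x)) k * Aseq k (projP m p x)) (injP m p y) =
              -(((m - p : ℕ) : ℝ)) • A₁ y)) ∧
      -- the coefficients are given by the stated formulas:
      (∀ k : ℕ, ∀ y ∈ Ω₀,
        Aseq (2 * k) y =
          (Real.Gamma (((m - p : ℕ) : ℝ) / 2) /
              (2 ^ (2 * k) * (k.factorial : ℝ) *
                Real.Gamma ((k : ℝ) + ((m - p : ℕ) : ℝ) / 2))) •
            lapIterP p k A₀ y ∧
        Aseq (2 * k + 1) y =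
          (Real.Gamma (((m - p : ℕ) : ℝ) / 2 + 1) /
              (2 ^ (2 * k) * (k.factorial : ℝ) *
                Real.Gamma ((k : ℝ) + ((m - p : ℕ) : ℝ) / 2 + 1))) •
            lapIterP p k A₁ y) ∧
      -- uniqueness: any sequence with these properties agrees with `Aseq` on `Ω₀`:
      (∀ Bseq : ℕ → (Fin (p + 1) → ℝ) → A,
        Bseq 0 = A₀ → Bseq 1 = A₁ →
        (∀ k, AnalyticOnNhd ℝ (Bseq k) Ω₀) →
        (∃ Ω' : Set (Fin (m + 1) → ℝ),
          PSym v m p Ω' ∧ SliceDomain v m p Ω' ∧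
          injP m p '' Ω₀ ⊆ Ω' ∧ Ω' ⊆ Omega0star m p Ω₀ ∧
          (∀ x ∈ Ω', Summable (fun k : ℕ =>
            apow (emb v m (xqpart m p x)) k * Bseq k (projP m p x))) ∧
          Harmonic m (fun x => ∑' k : ℕ,
            apow (emb v m (xqpart m p x)) k * Bseq k (projP m p x)) Ω') →
        ∀ k, Set.EqOn (Bseq k) (Aseq k) Ω₀) := by
  have := H.finDim
  have : CompleteSpace A := FiniteDimensional.complete ℝ A
  have : Nontrivial A := Module.nontrivial_of_finrank_pos (one_pos.trans H.one_lt_finrank)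
  obtain ⟨Aseq, h₀, h₁, hana, hext, hformula, huniq⟩ :=
    harmonic_generalized_CK_extension_general H.isLeftAlternativeAlg (hv.isCliffordFrame H p)
      hp hΩ₀ hΩ₀conn hA₀ hA₁
  exact ⟨Aseq, h₀, h₁, hana, hext, hformula, fun B hB₀ hB₁ _ ⟨Ω', _, hΩ', hsub, _, hs, hh⟩ =>
    huniq B hB₀ hB₁ ⟨Ω', hΩ'.1, hsub, hs, hh⟩⟩

end GPSM
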